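/- Let n ≥ 1 and n/(n+1) < p ≤ 1, let Ω ⊆ ℝⁿ be a bounded Lipschitz domain, and fix ψ as in the context. There is a finite constant C = C(p,n,Ω,ψ) such that every smooth function u : ℝⁿ → ℝ with compact support contained in Ω satisfies ∫_Ω ( |u(x)| / dist(x,∂Ω) )^p dx ≤ C · Σ_{j=1}^n ‖ sup_{t>0} |(∂_j u) * ψ_t| ‖_{L^p(ℝⁿ)}^p. -/

import Mathlib

open MeasureTheory Metric Set ENNReal NNReal

noncomputable section

/-- The partial derivative `∂_j φ` in the `j`-th coordinate direction. -/
def pderivIdx (n : ℕ) (j : Fin n) (φ : EuclideanSpace ℝ (Fin n) → ℝ)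
    (x : EuclideanSpace ℝ (Fin n)) : ℝ :=
  fderiv ℝ φ x (EuclideanSpace.single j 1)

/-- `sup_{t>0} |(∂_j u) * ψ_t|(x)`, the smooth maximal function of the partial
derivative of a differentiable function `u`, where `ψ_t(z) = t^{-n} ψ(z/t)`. -/
def convMax (n : ℕ) (ψ u : EuclideanSpace ℝ (Fin n) → ℝ) (j : Fin n)
    (x : EuclideanSpace ℝ (Fin n)) : ℝ≥0∞ :=
  ⨆ (t : {s : ℝ // 0 < s}),
    ENNReal.ofReal |∫ y, pderivIdx n j u y * ((t.1⁻¹) ^ n * ψ (t.1⁻¹ • (x - y)))|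

/-- `U` is a boundary neighbourhood of the domain `Ω ⊆ ℝ^{m+1}` in which, after an
isometric change of coordinates `A`, the boundary `U ∩ ∂Ω` is the graph of an
`L`-Lipschitz function `h` over the ball `B(0,δ) ⊆ ℝ^m`, and `U ∩ Ω` lies below this
graph. -/
def IsLipschitzGraphNbhd (m : ℕ) (L δ : ℝ)
    (Ω U : Set (EuclideanSpace ℝ (Fin (m + 1)))) : Prop :=
  ∃ (A : EuclideanSpace ℝ (Fin (m + 1)) ≃ᵢ EuclideanSpace ℝ (Fin (m + 1)))
    (h : EuclideanSpace ℝ (Fin m) → ℝ),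
    LipschitzOnWith (Real.toNNReal L) h (ball 0 δ) ∧
    A '' (U ∩ frontier Ω) =
      {q : EuclideanSpace ℝ (Fin (m + 1)) |
        ∃ y ∈ ball (0 : EuclideanSpace ℝ (Fin m)) δ,
          (∀ i : Fin m, q (Fin.castSucc i) = y i) ∧ q (Fin.last m) = h y} ∧
    ∀ q ∈ A '' (U ∩ Ω), ∃ y ∈ ball (0 : EuclideanSpace ℝ (Fin m)) δ,
      (∀ i : Fin m, q (Fin.castSucc i) = y i) ∧ q (Fin.last m) < h y

/-- `Ω` is a bounded Lipschitz domain in `ℝ^{m+1}`. -/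
def IsLipschitzDomain (m : ℕ) (Ω : Set (EuclideanSpace ℝ (Fin (m + 1)))) : Prop :=
  IsOpen Ω ∧ IsConnected Ω ∧ Bornology.IsBounded Ω ∧
    ∃ L δ : ℝ, 0 < L ∧ 0 < δ ∧
      ∀ z ∈ frontier Ω, ∃ U, IsOpen U ∧ z ∈ U ∧ IsLipschitzGraphNbhd m L δ Ω U

/-!
Near a Lipschitz graph, a point `x ∈ Ω` at distance `d` from `∂Ω` sees, within distance comparable
to `d`, a ball of radius comparable to `d` outside `Ω`, on which `u` vanishes. Writing `u(x)` as the
telescoping sum of its double mollifications `ψ_s * ψ_s * u` at the scales `s = d, d/2, d/4, …` and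
applying the mean value inequality at each scale gives `|u(x)| / d ≤ C N(x)`, where `N` is Peetre's
maximal function of `∇u`, `N(x) = sup_{s, y} |ψ_s * ∇u (y)| / (1 + |x - y| / s) ^ a`.

With `a = n / q`, the same telescoping applied to `ψ_t * ∇u`, together with
`|v| = |v| ^ (1 - q) |v| ^ q` for `v = ψ_s * ∇u (z)`, yields the self-improving estimate
`N ≤ C N ^ (1 - q) M((sup_s |ψ_s * ∇u|) ^ q)` with `M` the Hardy–Littlewood maximal function. The
dyadic series gains a factor `s / t` from the Lipschitz continuity of `ψ` and loses
`(t / s) ^ (a (1 - q))`, so it converges when `n (1 - q) / q < 1`, that is, `q > n / (n + 1)`. As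
`u` is smooth with compact support, `N` is finite and may be divided out. Choosing
`n / (n + 1) < q < p`, the maximal theorem with exponent `p / q > 1` concludes.
-/

open Module Function ContinuousLinearMap
open Filter (Tendsto)
open scoped Convolution Topology

/-! ### The Hardy–Littlewood maximal function -/

section HardyLittlewood

section LayerCake

theorem setLIntegral_rpow_sub_one_of_ne_top {r : ℝ} (hr : 0 < r) {a : ℝ≥0∞} (ha : a ≠ ⊤) :
    ∫⁻ l in {l : ℝ | 0 < l ∧ ENNReal.ofReal l < a}, ENNReal.ofReal (l ^ (r - 1)) =
      a ^ r / ENNReal.ofReal r := by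
  have hset : {l : ℝ | 0 < l ∧ ENNReal.ofReal l < a} = Ioo 0 a.toReal := by
    ext l
    exact and_congr_right fun hl => ENNReal.ofReal_lt_iff_lt_toReal hl.le ha
  have hpow : ENNReal.ofReal (a.toReal ^ r) = a ^ r := by
    rw [← ENNReal.ofReal_rpow_of_nonneg toReal_nonneg hr.le, ofReal_toReal ha]
  have hint : IntegrableOn (fun l : ℝ => l ^ (r - 1)) (Ioo 0 a.toReal) :=
    (intervalIntegrable_iff_integrableOn_Ioo_of_le toReal_nonneg).1
      (intervalIntegral.intervalIntegrable_rpow' (by linarith))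
  have hnonneg : ∀ᵐ l ∂volume.restrict (Ioo 0 a.toReal), (0 : ℝ) ≤ l ^ (r - 1) :=
    (ae_restrict_iff' measurableSet_Ioo).2 (ae_of_all _ fun l hl => Real.rpow_nonneg hl.1.le _)
  rw [hset, ← ofReal_integral_eq_lintegral_ofReal hint hnonneg, ← integral_Ioc_eq_integral_Ioo,
    ← intervalIntegral.integral_of_le toReal_nonneg, integral_rpow (Or.inl (by linarith)),
    sub_add_cancel, Real.zero_rpow hr.ne', sub_zero, ENNReal.ofReal_div_of_pos hr, hpow]

theorem setLIntegral_rpow_sub_one {r : ℝ} (hr : 0 < r) (a : ℝ≥0∞) :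
    ∫⁻ l in {l : ℝ | 0 < l ∧ ENNReal.ofReal l < a}, ENNReal.ofReal (l ^ (r - 1)) =
      a ^ r / ENNReal.ofReal r := by
  rcases ne_or_eq a ⊤ with ha | rfl
  · exact setLIntegral_rpow_sub_one_of_ne_top hr ha
  have hdiv : (⊤ : ℝ≥0∞) ^ r / ENNReal.ofReal r = ⊤ := by
    rw [top_rpow_of_pos hr, top_div_of_ne_top ofReal_ne_top]
  rw [hdiv]
  refine ENNReal.eq_top_of_forall_nnreal_le fun c => ?_
  obtain ⟨b, hb⟩ : ∃ b : ℝ≥0, (b : ℝ≥0∞) ^ r / ENNReal.ofReal r = c := by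
    refine ⟨(c * r.toNNReal) ^ r⁻¹, ?_⟩
    rw [ENNReal.coe_rpow_of_nonneg _ (inv_nonneg.2 hr.le), ENNReal.rpow_inv_rpow hr.ne',
      ENNReal.coe_mul]
    exact ENNReal.mul_div_cancel_right (by simpa using hr) ofReal_ne_top
  rw [← hb, ← setLIntegral_rpow_sub_one_of_ne_top hr coe_ne_top]
  exact lintegral_mono_set fun l hl => ⟨hl.1, hl.2.trans coe_lt_top⟩

theorem lintegral_mul_rpow_eq_lintegral_Ioi {α : Type*} [MeasurableSpace α] {μ : Measure α}
    [SFinite μ] {f g : α → ℝ≥0∞} (hf : Measurable f) (hg : Measurable g) {r : ℝ} (hr : 0 < r) :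
    ∫⁻ x, g x * f x ^ r ∂μ = ENNReal.ofReal r * ∫⁻ l in Ioi (0 : ℝ),
      (∫⁻ x in {x | ENNReal.ofReal l < f x}, g x ∂μ) * ENNReal.ofReal (l ^ (r - 1)) := by
  have hr0 : ENNReal.ofReal r ≠ 0 := by simpa using hr
  let k (x : α) (l : ℝ) : ℝ≥0∞ :=
    {z : α × ℝ | ENNReal.ofReal z.2 < f z.1}.indicator
      (fun z => g z.1 * ENNReal.ofReal (z.2 ^ (r - 1))) (x, l)
  have hk : Measurable (uncurry k) :=
    (by fun_prop : Measurable fun z : α × ℝ => g z.1 * ENNReal.ofReal (z.2 ^ (r - 1))).indicator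
      (measurableSet_lt (by fun_prop) (by fun_prop))
  have hinner (x : α) :
      ∫⁻ l in Ioi (0 : ℝ), k x l = g x * f x ^ r / ENNReal.ofReal r := by
    have hset : MeasurableSet {l : ℝ | ENNReal.ofReal l < f x} :=
      measurableSet_lt (by fun_prop) measurable_const
    calc ∫⁻ l in Ioi (0 : ℝ), k x l
        = ∫⁻ l in {l : ℝ | ENNReal.ofReal l < f x} ∩ Ioi 0,
            g x * ENNReal.ofReal (l ^ (r - 1)) := setLIntegral_indicator hset _
      _ = _ := by
        rw [lintegral_const_mul _ (by fun_prop), inter_comm, mul_div_assoc]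
        exact congrArg _ (setLIntegral_rpow_sub_one hr (f x))
  have houter (l : ℝ) : ∫⁻ x, k x l ∂μ =
      (∫⁻ x in {x | ENNReal.ofReal l < f x}, g x ∂μ) * ENNReal.ofReal (l ^ (r - 1)) := by
    have hset : MeasurableSet {x | ENNReal.ofReal l < f x} := measurableSet_lt measurable_const hf
    rw [← lintegral_mul_const _ hg]
    exact lintegral_indicator hset _
  calc ∫⁻ x, g x * f x ^ r ∂μ
      = ENNReal.ofReal r * ∫⁻ x, g x * f x ^ r / ENNReal.ofReal r ∂μ := by
        rw [← lintegral_const_mul' _ _ ofReal_ne_top]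
        simp only [ENNReal.mul_div_cancel hr0 ofReal_ne_top]
    _ = ENNReal.ofReal r * ∫⁻ l in Ioi (0 : ℝ), ∫⁻ x, k x l ∂μ := by
        simp only [← hinner]
        rw [lintegral_lintegral_swap hk.aemeasurable]
    _ = _ := by simp only [houter]

end LayerCake

variable {E : Type*} [NormedAddCommGroup E] [MeasurableSpace E] {μ : Measure E}

/-- The uncentred Hardy–Littlewood maximal function of a nonnegative function: the supremum of its
averages over the open balls containing the given point. -/
def hlMax (μ : Measure E) (g : E → ℝ≥0∞) (x : E) : ℝ≥0∞ :=
  ⨆ (z : E) (R : ℝ) (_ : x ∈ ball z R), ⨍⁻ y in ball z R, g y ∂μ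

theorem laverage_ball_le_hlMax (g : E → ℝ≥0∞) {x z : E} {R : ℝ} (hx : x ∈ ball z R) :
    ⨍⁻ y in ball z R, g y ∂μ ≤ hlMax μ g x :=
  le_iSup₂_of_le z R (le_iSup_of_le hx le_rfl)

theorem setLIntegral_ball_le_measure_mul_hlMax [ProperSpace E] [IsFiniteMeasureOnCompacts μ]
    (g : E → ℝ≥0∞) {x z : E} {R : ℝ} (hx : x ∈ ball z R) :
    ∫⁻ y in ball z R, g y ∂μ ≤ μ (ball z R) * hlMax μ g x := by
  rw [← measure_mul_setLAverage g measure_ball_lt_top.ne]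
  gcongr
  exact laverage_ball_le_hlMax g hx

theorem lt_hlMax_iff {g : E → ℝ≥0∞} {x : E} {l : ℝ≥0∞} :
    l < hlMax μ g x ↔ ∃ z R, x ∈ ball z R ∧ l < ⨍⁻ y in ball z R, g y ∂μ := by
  simp only [hlMax, lt_iSup_iff, exists_prop]

theorem lowerSemicontinuous_hlMax (g : E → ℝ≥0∞) : LowerSemicontinuous (hlMax μ g) := by
  intro x l hl
  obtain ⟨z, R, hx, hlt⟩ := lt_hlMax_iff.1 hl
  filter_upwards [isOpen_ball.mem_nhds hx] with y hy
  exact lt_hlMax_iff.2 ⟨z, R, hy, hlt⟩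

theorem measurable_hlMax [BorelSpace E] (g : E → ℝ≥0∞) : Measurable (hlMax μ g) :=
  (lowerSemicontinuous_hlMax g).measurable

theorem hlMax_le_hlMax_indicator_add (g : E → ℝ≥0∞) (l : ℝ≥0∞) (x : E) :
    hlMax μ g x ≤ hlMax μ ({y | l < g y}.indicator g) x + l := by
  refine iSup₂_le fun z R => iSup_le fun hx => ?_
  have hle (y : E) : g y ≤ {y | l < g y}.indicator g y + l := by
    by_cases hy : l < g y
    · simp [indicator_of_mem (s := {y | l < g y}) hy]
    · exact (not_lt.1 hy).trans le_add_self
  calc ⨍⁻ y in ball z R, g y ∂μ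
      ≤ ⨍⁻ y in ball z R, ({y | l < g y}.indicator g y + l) ∂μ := lintegral_mono hle
    _ = (⨍⁻ y in ball z R, {y | l < g y}.indicator g y ∂μ) + ⨍⁻ _ in ball z R, l ∂μ :=
        lintegral_add_right _ measurable_const
    _ ≤ hlMax μ ({y | l < g y}.indicator g) x + l := by
        gcongr
        · exact laverage_ball_le_hlMax _ hx
        · rw [setLAverage_eq, setLIntegral_const]
          exact ENNReal.div_le_of_le_mul le_rfl

variable [NormedSpace ℝ E] [FiniteDimensional ℝ E] [BorelSpace E] [μ.IsAddHaarMeasure]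

theorem exists_disjoint_measure_biUnion_ball_le (t : Set (E × ℝ)) {R₀ : ℝ}
    (ht : ∀ a ∈ t, 0 < a.2 ∧ a.2 ≤ R₀) :
    ∃ v ⊆ t, v.Countable ∧ v.PairwiseDisjoint (fun a => ball a.1 a.2) ∧
      μ (⋃ a ∈ t, ball a.1 a.2) ≤ 4 ^ finrank ℝ E * ∑' a : v, μ (ball a.1.1 a.1.2) := by
  obtain ⟨v, hvt, hdisj, hcover⟩ :=
    Vitali.exists_disjoint_subfamily_covering_enlargement_closedBall t Prod.fst Prod.snd R₀
      (fun a ha => (ht a ha).2) 4 (by norm_num)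
  have hdisj' : v.PairwiseDisjoint fun a => ball a.1 a.2 :=
    hdisj.mono fun a => ball_subset_closedBall
  have hcount : v.Countable := hdisj'.countable_of_isOpen (fun _ _ => isOpen_ball)
    fun a ha => nonempty_ball.2 (ht a (hvt ha)).1
  refine ⟨v, hvt, hcount, hdisj', ?_⟩
  calc μ (⋃ a ∈ t, ball a.1 a.2)
      ≤ μ (⋃ a ∈ v, closedBall a.1 (4 * a.2)) := by
        refine measure_mono (iUnion₂_subset fun a ha => ?_)
        obtain ⟨b, hb, hab⟩ := hcover a ha
        exact ball_subset_closedBall.trans (hab.trans (subset_biUnion_of_mem (u := fun b : E × ℝ =>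
          closedBall b.1 (4 * b.2)) hb))
    _ ≤ ∑' a : v, μ (closedBall a.1.1 (4 * a.1.2)) := measure_biUnion_le μ hcount _
    _ = ∑' a : v, 4 ^ finrank ℝ E * μ (ball a.1.1 a.1.2) := by
        refine tsum_congr fun a => ?_
        have hpos := (ht a (hvt a.2)).1
        rw [Measure.addHaar_closedBall μ _ (by positivity), Measure.addHaar_ball_of_pos μ _ hpos,
          mul_pow, ENNReal.ofReal_mul (by positivity), ENNReal.ofReal_pow (by norm_num),
          ENNReal.ofReal_ofNat, mul_assoc]
    _ = 4 ^ finrank ℝ E * ∑' a : v, μ (ball a.1.1 a.1.2) := ENNReal.tsum_mul_left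

variable [Nontrivial E]

theorem le_max_one_of_mul_measure_ball_le {x : E} {R : ℝ} {l I : ℝ≥0∞} (hl₀ : l ≠ 0) (hI : I ≠ ⊤)
    (h : l * μ (ball x R) ≤ I) : R ≤ max 1 (I / (l * μ (ball 0 1))).toReal := by
  rcases le_total R 1 with hR | hR
  · exact le_max_of_le_left hR
  have hunit : μ (ball (0 : E) 1) ≠ 0 := (measure_ball_pos μ _ one_pos).ne'
  have hquot : I / (l * μ (ball (0 : E) 1)) ≠ ⊤ := ENNReal.div_ne_top hI (mul_ne_zero hl₀ hunit)
  refine le_max_of_le_right ((le_self_pow₀ hR (finrank_pos (R := ℝ) (M := E)).ne').trans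
    ((ENNReal.ofReal_le_iff_le_toReal hquot).1 (ENNReal.le_div_iff_mul_le ?_ ?_ |>.2 ?_)))
  · exact Or.inl (mul_ne_zero hl₀ hunit)
  · exact Or.inr hI
  · rwa [mul_left_comm, ← Measure.addHaar_ball_of_pos μ x (one_pos.trans_le hR)]

theorem mul_measure_lt_hlMax_le (g : E → ℝ≥0∞) {l : ℝ≥0∞} (hl₀ : l ≠ 0) :
    l * μ {x | l < hlMax μ g x} ≤ 4 ^ finrank ℝ E * ∫⁻ y, g y ∂μ := by
  rcases eq_or_ne (∫⁻ y, g y ∂μ) ⊤ with hI | hI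
  · simp [hI]
  let t : Set (E × ℝ) := {a | 0 < a.2 ∧ l * μ (ball a.1 a.2) ≤ ∫⁻ y in ball a.1 a.2, g y ∂μ}
  have hcover : {x | l < hlMax μ g x} ⊆ ⋃ a ∈ t, ball a.1 a.2 := by
    intro x hx
    obtain ⟨z, R, hxz, hlt⟩ := lt_hlMax_iff.1 hx
    refine mem_biUnion (x := (z, R)) ⟨pos_of_mem_ball hxz, ?_⟩ hxz
    rw [setLAverage_eq] at hlt
    exact ENNReal.mul_le_of_le_div hlt.le
  obtain ⟨v, hvt, hcount, hdisj, hv⟩ := exists_disjoint_measure_biUnion_ball_le (μ := μ) t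
    fun a ha => ⟨ha.1, le_max_one_of_mul_measure_ball_le hl₀ hI
      (ha.2.trans (setLIntegral_le_lintegral _ _))⟩
  calc l * μ {x | l < hlMax μ g x}
      ≤ l * (4 ^ finrank ℝ E * ∑' a : v, μ (ball a.1.1 a.1.2)) := by
        gcongr
        exact (measure_mono hcover).trans hv
    _ = 4 ^ finrank ℝ E * ∑' a : v, l * μ (ball a.1.1 a.1.2) := by
        rw [mul_left_comm, ENNReal.tsum_mul_left]
    _ ≤ 4 ^ finrank ℝ E * ∑' a : v, ∫⁻ y in ball a.1.1 a.1.2, g y ∂μ := by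
        gcongr with a
        exact (hvt a.2).2
    _ ≤ 4 ^ finrank ℝ E * ∫⁻ y, g y ∂μ := by
        rw [← lintegral_biUnion hcount (fun _ _ => measurableSet_ball) hdisj]
        gcongr
        exact Measure.restrict_le_self

theorem mul_measure_lt_hlMax_le_setLIntegral {g : E → ℝ≥0∞} (hg : Measurable g) {l : ℝ≥0∞}
    (hl₀ : l ≠ 0) :
    l * μ {x | l < hlMax μ g x} ≤
      2 * 4 ^ finrank ℝ E * ∫⁻ y in {y | l < 2 * g y}, g y ∂μ := by
  have hset : {y | l / 2 < g y} = {y | l < 2 * g y} := by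
    ext y
    rw [mem_ofPred_eq, mem_ofPred_eq, mul_comm]
    exact ENNReal.div_lt_iff (Or.inl two_ne_zero) (Or.inl ofNat_ne_top)
  have hsub : {x | l < hlMax μ g x} ⊆
      {x | l / 2 < hlMax μ ({y | l / 2 < g y}.indicator g) x} := by
    intro x (hx : l < hlMax μ g x)
    refine lt_of_add_lt_add_right (a := l / 2) ?_
    rw [ENNReal.add_halves]
    exact hx.trans_le (hlMax_le_hlMax_indicator_add g (l / 2) x)
  calc l * μ {x | l < hlMax μ g x}
      ≤ 2 * (l / 2 * μ {x | l / 2 < hlMax μ ({y | l / 2 < g y}.indicator g) x}) := by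
        rw [← mul_assoc, ENNReal.mul_div_cancel two_ne_zero ofNat_ne_top]
        gcongr
    _ ≤ 2 * (4 ^ finrank ℝ E * ∫⁻ y, {y | l / 2 < g y}.indicator g y ∂μ) := by
        gcongr 2 * ?_
        exact mul_measure_lt_hlMax_le _ (ENNReal.half_pos hl₀).ne'
    _ = 2 * 4 ^ finrank ℝ E * ∫⁻ y in {y | l < 2 * g y}, g y ∂μ := by
        rw [lintegral_indicator (measurableSet_lt measurable_const hg), hset, mul_assoc]

theorem measure_lt_hlMax_mul_rpow_le {g : E → ℝ≥0∞} (hg : Measurable g) {l : ℝ} (hl : 0 < l)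
    (r : ℝ) :
    μ {x | ENNReal.ofReal l < hlMax μ g x} * ENNReal.ofReal (l ^ r) ≤
      2 * 4 ^ finrank ℝ E * ((∫⁻ x in {x | ENNReal.ofReal l < 2 * g x}, g x ∂μ) *
        ENNReal.ofReal (l ^ (r - 1))) := by
  have hsplit : ENNReal.ofReal (l ^ r) = ENNReal.ofReal l * ENNReal.ofReal (l ^ (r - 1)) := by
    rw [← ENNReal.ofReal_mul hl.le, Real.rpow_sub_one hl.ne', mul_div_cancel₀ _ hl.ne']
  rw [hsplit, ← mul_assoc, ← mul_assoc, mul_comm (μ _)]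
  exact mul_le_mul_left (mul_measure_lt_hlMax_le_setLIntegral hg (by simpa using hl)) _

theorem lintegral_hlMax_rpow_le {g : E → ℝ≥0∞} (hg : Measurable g) {r : ℝ} (hr : 1 < r) :
    ∫⁻ x, hlMax μ g x ^ r ∂μ ≤
      2 ^ r * 4 ^ finrank ℝ E * ENNReal.ofReal (r / (r - 1)) * ∫⁻ x, g x ^ r ∂μ := by
  have hr₁ : 0 < r - 1 := sub_pos.2 hr
  calc ∫⁻ x, hlMax μ g x ^ r ∂μ
      = ENNReal.ofReal r * ∫⁻ l in Ioi (0 : ℝ),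
          μ {x | ENNReal.ofReal l < hlMax μ g x} * ENNReal.ofReal (l ^ (r - 1)) := by
        simpa using lintegral_mul_rpow_eq_lintegral_Ioi (μ := μ) (measurable_hlMax g)
          measurable_one (one_pos.trans hr)
    _ ≤ ENNReal.ofReal r * (2 * 4 ^ finrank ℝ E * ∫⁻ l in Ioi (0 : ℝ),
          (∫⁻ x in {x | ENNReal.ofReal l < 2 * g x}, g x ∂μ) *
            ENNReal.ofReal (l ^ (r - 1 - 1))) := by
        gcongr ENNReal.ofReal r * ?_
        rw [← lintegral_const_mul' (2 * 4 ^ finrank ℝ E) _ (by finiteness)]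
        exact setLIntegral_mono' measurableSet_Ioi fun l hl => measure_lt_hlMax_mul_rpow_le hg hl _
    _ = ENNReal.ofReal r * (2 * 4 ^ finrank ℝ E *
          ((∫⁻ x, g x * (2 * g x) ^ (r - 1) ∂μ) / ENNReal.ofReal (r - 1))) := by
        rw [lintegral_mul_rpow_eq_lintegral_Ioi (hg.const_mul 2) hg hr₁,
          mul_comm (ENNReal.ofReal (r - 1)),
          ENNReal.mul_div_cancel_right (by simpa using hr) ofReal_ne_top]
    _ = _ := by
        have hpow (x : E) : g x * (2 * g x) ^ (r - 1) = 2 ^ (r - 1) * g x ^ r := by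
          rw [ENNReal.mul_rpow_of_nonneg _ _ hr₁.le, mul_left_comm]
          nth_rw 1 [← ENNReal.rpow_one (g x)]
          rw [← ENNReal.rpow_add_of_nonneg _ _ zero_le_one hr₁.le, add_sub_cancel]
        simp only [hpow]
        rw [lintegral_const_mul' _ _ (by finiteness), ENNReal.ofReal_div_of_pos hr₁,
          ← add_sub_cancel 1 r, ENNReal.rpow_add _ _ two_ne_zero ofNat_ne_top, ENNReal.rpow_one]
        simp only [div_eq_mul_inv, add_sub_cancel]
        ring

end HardyLittlewood

/-! ### Mollification -/

section Mollification

section Dilation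

variable {E : Type*} [NormedAddCommGroup E] [NormedSpace ℝ E] {ψ : E → ℝ}

/-- The `L¹`-normalised dilation `ψ_t(x) = t⁻ⁿ ψ(x / t)` of a function on an `n`-dimensional
space. -/
def dilate (ψ : E → ℝ) (t : ℝ) (x : E) : ℝ :=
  t⁻¹ ^ finrank ℝ E * ψ (t⁻¹ • x)

theorem support_dilate_subset (hψ : support ψ ⊆ ball 0 1) {t : ℝ} (ht : 0 < t) :
    support (dilate ψ t) ⊆ ball 0 t := by
  intro x hx
  have hx' : t⁻¹ • x ∈ ball (0 : E) 1 := hψ (right_ne_zero_of_mul hx)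
  rwa [mem_ball_zero_iff, norm_smul, Real.norm_of_nonneg (inv_nonneg.2 ht.le), inv_mul_lt_iff₀ ht,
    mul_one, ← mem_ball_zero_iff] at hx'

theorem integral_norm_dilate [FiniteDimensional ℝ E] [MeasurableSpace E] [BorelSpace E]
    (μ : Measure E) [μ.IsAddHaarMeasure] (ψ : E → ℝ) {t : ℝ} (ht : 0 < t) :
    ∫ x, ‖dilate ψ t x‖ ∂μ = ∫ x, ‖ψ x‖ ∂μ := by
  simp only [dilate, norm_mul, norm_pow, Real.norm_of_nonneg (inv_nonneg.2 ht.le)]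
  rw [integral_const_mul, Measure.integral_comp_inv_smul_of_nonneg μ (fun x => ‖ψ x‖) ht.le,
    smul_eq_mul, ← mul_assoc, ← mul_pow, inv_mul_cancel₀ ht.ne', one_pow, one_mul]

end Dilation

variable {E F : Type*} [NormedAddCommGroup E] [NormedSpace ℝ E] [MeasurableSpace E]
  [NormedAddCommGroup F] [NormedSpace ℝ F] {μ : Measure E} {Λ : ℝ≥0} {ψ : E → ℝ}

/-- A mollifier of the regularity that the maximal function estimates need: a `Λ`-Lipschitz function
supported in the unit ball with integral one. -/
structure IsLipschitzMollifier (μ : Measure E) (Λ : ℝ≥0) (ψ : E → ℝ) : Prop where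
  lipschitzWith : LipschitzWith Λ ψ
  support_subset : support ψ ⊆ ball 0 1
  integral_eq_one : ∫ x, ψ x ∂μ = 1

/-- The mollification `ψ_t * f` of a vector-valued function `f` at scale `t`. -/
def mollify (μ : Measure E) (ψ : E → ℝ) (t : ℝ) (f : E → F) : E → F :=
  dilate ψ t ⋆[lsmul ℝ ℝ, μ] f

namespace IsLipschitzMollifier

theorem continuous_dilate (hψ : IsLipschitzMollifier μ Λ ψ) (t : ℝ) : Continuous (dilate ψ t) := by
  have := hψ.lipschitzWith.continuous
  unfold dilate
  fun_prop

theorem norm_dilate_sub_dilate_le (hψ : IsLipschitzMollifier μ Λ ψ) {t : ℝ} (ht : 0 < t) (x y : E) :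
    ‖dilate ψ t x - dilate ψ t y‖ ≤ t⁻¹ ^ finrank ℝ E * (Λ * (‖x - y‖ / t)) := by
  have hlip := hψ.lipschitzWith.norm_sub_le (t⁻¹ • x) (t⁻¹ • y)
  rw [← smul_sub, norm_smul, Real.norm_of_nonneg (inv_nonneg.2 ht.le), inv_mul_eq_div] at hlip
  rw [dilate, dilate, ← mul_sub, norm_mul, norm_pow, Real.norm_of_nonneg (inv_nonneg.2 ht.le)]
  gcongr

theorem norm_le [Nontrivial E] (hψ : IsLipschitzMollifier μ Λ ψ) (x : E) : ‖ψ x‖ ≤ 2 * Λ := by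
  by_cases hx : x ∈ support ψ
  · obtain ⟨e, he⟩ := exists_norm_eq E zero_le_one
    have hψe : ψ e = 0 := by
      by_contra h
      exact (mem_ball_zero_iff.1 (hψ.support_subset h)).ne he
    have hxe : ‖x - e‖ ≤ 2 := by
      linarith [norm_sub_le x e, mem_ball_zero_iff.1 (hψ.support_subset hx)]
    calc ‖ψ x‖ = ‖ψ x - ψ e‖ := by rw [hψe, sub_zero]
      _ ≤ Λ * ‖x - e‖ := hψ.lipschitzWith.norm_sub_le x e
      _ ≤ 2 * Λ := by rw [mul_comm]; gcongr
  · rw [notMem_support.1 hx, norm_zero]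
    positivity

theorem norm_dilate_le [Nontrivial E] (hψ : IsLipschitzMollifier μ Λ ψ) {t : ℝ} (ht : 0 < t)
    (x : E) : ‖dilate ψ t x‖ ≤ t⁻¹ ^ finrank ℝ E * (2 * Λ) := by
  rw [dilate, norm_mul, norm_pow, Real.norm_of_nonneg (inv_nonneg.2 ht.le)]
  gcongr
  exact hψ.norm_le _

variable [FiniteDimensional ℝ E]

theorem hasCompactSupport_dilate (hψ : IsLipschitzMollifier μ Λ ψ) {t : ℝ} (ht : 0 < t) :
    HasCompactSupport (dilate ψ t) :=
  .intro (isCompact_closedBall 0 t) fun _ hx => notMem_support.1 fun hx' =>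
    hx (ball_subset_closedBall (support_dilate_subset hψ.support_subset ht hx'))

variable [BorelSpace E] [μ.IsAddHaarMeasure]

theorem integrable_dilate (hψ : IsLipschitzMollifier μ Λ ψ) {t : ℝ} (ht : 0 < t) :
    Integrable (dilate ψ t) μ :=
  (hψ.continuous_dilate t).integrable_of_hasCompactSupport (hψ.hasCompactSupport_dilate ht)

theorem integral_dilate (hψ : IsLipschitzMollifier μ Λ ψ) {t : ℝ} (ht : 0 < t) :
    ∫ x, dilate ψ t x ∂μ = 1 := by
  unfold dilate
  rw [integral_const_mul, Measure.integral_comp_inv_smul_of_nonneg μ ψ ht.le, hψ.integral_eq_one,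
    smul_eq_mul, mul_one, ← mul_pow, inv_mul_cancel₀ ht.ne', one_pow]

theorem continuous_mollify (hψ : IsLipschitzMollifier μ Λ ψ) {t : ℝ} (ht : 0 < t) {f : E → F}
    (hf : Continuous f) : Continuous (mollify μ ψ t f) :=
  (hψ.hasCompactSupport_dilate ht).continuous_convolution_left _ (hψ.continuous_dilate t)
    hf.locallyIntegrable

variable [CompleteSpace F] {f : E → F} {x : E} {s t ε : ℝ}

theorem norm_mollify_sub_le (hψ : IsLipschitzMollifier μ Λ ψ) (hs : 0 < s)
    (hf : Continuous f) {z : F} (hz : ∀ y ∈ ball x s, ‖f y - z‖ ≤ ε) :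
    ‖mollify μ ψ s f x - z‖ ≤ (∫ y, ‖ψ y‖ ∂μ) * ε := by
  have hε : 0 ≤ ε := (norm_nonneg _).trans (hz x (mem_ball_self hs))
  have hconst : ∫ y, lsmul ℝ ℝ (dilate ψ s y) z ∂μ = z := by
    simp only [lsmul_apply]
    rw [integral_smul_const, hψ.integral_dilate hs, one_smul]
  have hdist := dist_convolution_le' (lsmul ℝ ℝ) hε (hψ.integrable_dilate hs)
    (support_dilate_subset hψ.support_subset hs) hf.aestronglyMeasurable
    fun y hy => (dist_eq_norm (f y) z).trans_le (hz y hy)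
  rw [hconst, dist_eq_norm, integral_norm_dilate μ ψ hs] at hdist
  refine hdist.trans (mul_le_mul_of_nonneg_right ?_ hε)
  exact mul_le_of_le_one_left (integral_nonneg fun y => norm_nonneg _) opNorm_lsmul_le

theorem norm_mollify_le (hψ : IsLipschitzMollifier μ Λ ψ) (hs : 0 < s) (hf : Continuous f)
    (hε : ∀ y ∈ ball x s, ‖f y‖ ≤ ε) : ‖mollify μ ψ s f x‖ ≤ (∫ y, ‖ψ y‖ ∂μ) * ε := by
  simpa using hψ.norm_mollify_sub_le hs hf (z := 0) (by simpa using hε)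

theorem norm_mollify_sub_mollify_le (hψ : IsLipschitzMollifier μ Λ ψ) {r : ℝ} (hr : 0 < r)
    (hrs : r ≤ s) (hf : Continuous f) {z : F} (hz : ∀ y ∈ ball x s, ‖f y - z‖ ≤ ε) :
    ‖mollify μ ψ r f x - mollify μ ψ s f x‖ ≤ 2 * (∫ y, ‖ψ y‖ ∂μ) * ε := by
  have hr_le := hψ.norm_mollify_sub_le hr hf fun y hy => hz y (ball_subset_ball hrs hy)
  have hs_le := hψ.norm_mollify_sub_le (hr.trans_le hrs) hf hz
  have htri := norm_sub_le (mollify μ ψ r f x - z) (mollify μ ψ s f x - z)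
  rw [sub_sub_sub_cancel_right] at htri
  linarith

theorem tendsto_mollify_mollify (hψ : IsLipschitzMollifier μ Λ ψ) (hf : Continuous f) (x : E) :
    Tendsto (fun s => mollify μ ψ s (mollify μ ψ s f) x) (𝓝[>] 0) (𝓝 (f x)) := by
  set K : ℝ := ∫ y, ‖ψ y‖ ∂μ
  refine Metric.tendsto_nhds.2 fun ε hε => ?_
  obtain ⟨δ, hδ, hball⟩ := Metric.continuous_iff.1 hf x (ε / (K * K + 1)) (by positivity)
  filter_upwards [Ioo_mem_nhdsGT (half_pos hδ)] with s hs
  have hnear (y : E) (hy : y ∈ ball x s) :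
      ‖mollify μ ψ s f y - f x‖ ≤ K * (ε / (K * K + 1)) := by
    refine hψ.norm_mollify_sub_le hs.1 hf fun y' hy' => ?_
    rw [← dist_eq_norm]
    exact (hball y' (by linarith [dist_triangle y' y x, mem_ball.1 hy, mem_ball.1 hy', hs.2])).le
  rw [dist_eq_norm]
  calc ‖mollify μ ψ s (mollify μ ψ s f) x - f x‖
      ≤ K * (K * (ε / (K * K + 1))) :=
        hψ.norm_mollify_sub_le hs.1 (hψ.continuous_mollify hs.1 hf) hnear
    _ < ε := by
        rw [← mul_assoc, ← mul_div_assoc, div_lt_iff₀ (by positivity)]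
        linarith

theorem mollify_convolution (hψ : IsLipschitzMollifier μ Λ ψ) (hs : 0 < s)
    {χ : E → ℝ} (hχ : Continuous χ) (hχc : HasCompactSupport χ) (hf : Continuous f) :
    mollify μ ψ s (χ ⋆[lsmul ℝ ℝ, μ] f) = mollify μ ψ s χ ⋆[lsmul ℝ ℝ, μ] f := by
  have hχf := hχc.norm.convolutionExists_left (mul ℝ ℝ) hχ.norm (hf.norm.locallyIntegrable (μ := μ))
  have hcont : Continuous ((fun y => ‖χ y‖) ⋆[mul ℝ ℝ, μ] fun y => ‖f y‖) :=
    hχc.norm.continuous_convolution_left _ hχ.norm hf.norm.locallyIntegrable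
  ext x
  exact (convolution_assoc (lsmul ℝ ℝ) (lsmul ℝ ℝ) (lsmul ℝ ℝ) (lsmul ℝ ℝ)
    (fun a b v => mul_smul a b v) (hψ.continuous_dilate s).aestronglyMeasurable
    hχ.aestronglyMeasurable hf.aestronglyMeasurable
    (ae_of_all _ <| (hψ.hasCompactSupport_dilate hs).convolutionExists_left _
      (hψ.continuous_dilate s) hχ.locallyIntegrable) (ae_of_all _ hχf)
    ((hψ.hasCompactSupport_dilate hs).norm.convolutionExists_left _ (hψ.continuous_dilate s).norm
      hcont.locallyIntegrable x)).symm

theorem mollify_comm (hψ : IsLipschitzMollifier μ Λ ψ) (hs : 0 < s) (ht : 0 < t)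
    (hf : Continuous f) :
    mollify μ ψ s (mollify μ ψ t f) = mollify μ ψ t (mollify μ ψ s f) := by
  have hcomm : mollify μ ψ s (dilate ψ t) = mollify μ ψ t (dilate ψ s) := by
    ext x
    simp only [mollify, convolution_lsmul_swap (g := dilate ψ t), convolution_lsmul, smul_eq_mul,
      mul_comm]
  calc mollify μ ψ s (mollify μ ψ t f)
      = mollify μ ψ s (dilate ψ t) ⋆[lsmul ℝ ℝ, μ] f :=
        hψ.mollify_convolution hs (hψ.continuous_dilate t) (hψ.hasCompactSupport_dilate ht) hf
    _ = mollify μ ψ t (dilate ψ s) ⋆[lsmul ℝ ℝ, μ] f := by rw [hcomm]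
    _ = mollify μ ψ t (mollify μ ψ s f) :=
        (hψ.mollify_convolution ht (hψ.continuous_dilate s)
          (hψ.hasCompactSupport_dilate hs) hf).symm

theorem enorm_le_enorm_mollify_add_tsum (hψ : IsLipschitzMollifier μ Λ ψ) (ht : 0 < t)
    (hf : Continuous f) {b : ℕ → ℝ≥0∞}
    (hb : ∀ k, ∀ s ∈ ({t / 2 ^ k, t / 2 ^ (k + 1)} : Set ℝ),
      ‖mollify μ ψ (t / 2 ^ (k + 1)) (mollify μ ψ s f) x -
        mollify μ ψ (t / 2 ^ k) (mollify μ ψ s f) x‖ₑ ≤ b k) :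
    ‖f x‖ₑ ≤ ‖mollify μ ψ t (mollify μ ψ t f) x‖ₑ + 2 * ∑' k, b k := by
  have hpos (k : ℕ) : 0 < t / 2 ^ k := by positivity
  let g (k : ℕ) : F := mollify μ ψ (t / 2 ^ k) (mollify μ ψ (t / 2 ^ k) f) x
  have hstep (k : ℕ) : edist (g k) (g (k + 1)) ≤ 2 * b k := by
    have hmid := hψ.mollify_comm (hpos (k + 1)) (hpos k) hf
    rw [edist_comm, two_mul]
    refine (edist_triangle _ (mollify μ ψ (t / 2 ^ (k + 1)) (mollify μ ψ (t / 2 ^ k) f) x) _).trans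
      (add_le_add ?_ ?_)
    · rw [hmid, edist_eq_enorm_sub]
      exact hb k _ (mem_insert_of_mem _ rfl)
    · rw [edist_eq_enorm_sub]
      exact hb k _ (mem_insert _ _)
  have hscale : Tendsto (fun k : ℕ => t / 2 ^ k) Filter.atTop (𝓝[>] 0) := by
    refine tendsto_nhdsWithin_iff.2 ⟨?_, .of_forall hpos⟩
    have hpow : Tendsto (fun k : ℕ => (2⁻¹ : ℝ) ^ k) Filter.atTop (𝓝 0) :=
      tendsto_pow_atTop_nhds_zero_of_lt_one (by norm_num) (by norm_num)
    simpa [div_eq_mul_inv] using hpow.const_mul t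
  have hlim : Tendsto g Filter.atTop (𝓝 (f x)) := (hψ.tendsto_mollify_mollify hf x).comp hscale
  have hdist : edist (f x) (g 0) ≤ 2 * ∑' k, b k := by
    rw [edist_comm, ← ENNReal.tsum_mul_left]
    exact edist_le_tsum_of_edist_le_of_tendsto₀ _ hstep hlim
  calc ‖f x‖ₑ = edist (f x) 0 := (edist_zero_right _).symm
    _ ≤ edist (g 0) 0 + edist (f x) (g 0) := (edist_triangle _ _ _).trans_eq (add_comm _ _)
    _ ≤ ‖mollify μ ψ t (mollify μ ψ t f) x‖ₑ + 2 * ∑' k, b k := by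
        simpa [g] using add_le_add_right hdist ‖g 0‖ₑ

end IsLipschitzMollifier

end Mollification

/-! ### Radial and Peetre maximal functions -/

section MaximalFunctions

theorem rpow_le_of_le_mul_rpow_one_sub {v B : ℝ≥0∞} {q : ℝ} (hv : v ≠ ⊤) (hq₀ : 0 < q) (hq₁ : q ≤ 1)
    (h : v ≤ B * v ^ (1 - q)) : v ^ q ≤ B := by
  rcases eq_or_ne v 0 with rfl | hv₀
  · simp [hq₀]
  · refine (ENNReal.mul_le_mul_iff_left (ENNReal.rpow_pos (pos_iff_ne_zero.2 hv₀) hv).ne'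
      (rpow_ne_top_of_nonneg (sub_nonneg.2 hq₁) hv)).1 ?_
    rwa [← ENNReal.rpow_add_of_nonneg _ _ hq₀.le (sub_nonneg.2 hq₁), add_sub_cancel,
      ENNReal.rpow_one]

theorem one_add_norm_sub_div_le {E : Type*} [SeminormedAddCommGroup E] {x y z : E} {s t : ℝ}
    (hs : 0 < s) (hst : s ≤ t) (hz : z ∈ ball y (2 * t)) :
    1 + ‖x - z‖ / s ≤ t / s * (3 * (1 + ‖x - y‖ / t)) := by
  have ht : 0 < t := hs.trans_le hst
  have htri : ‖x - z‖ ≤ ‖x - y‖ + 2 * t := by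
    have hyz : ‖y - z‖ < 2 * t := by rwa [← dist_eq_norm, dist_comm]
    linarith [norm_sub_le_norm_sub_add_norm_sub x y z]
  calc 1 + ‖x - z‖ / s = (s + ‖x - z‖) / s := by field_simp
    _ ≤ (3 * (t + ‖x - y‖)) / s := by
        gcongr
        linarith [norm_nonneg (x - y)]
    _ = t / s * (3 * (1 + ‖x - y‖ / t)) := by field_simp

theorem enorm_convolution_le_setLIntegral_ball {E F : Type*} [NormedAddCommGroup E]
    [SecondCountableTopology E] [MeasurableSpace E] [BorelSpace E] {μ : Measure E}
    [μ.IsAddLeftInvariant] [μ.IsNegInvariant] [NormedAddCommGroup F] [NormedSpace ℝ F] {η : E → ℝ}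
    {A r : ℝ} (hη : ∀ z, ‖η z‖ ≤ A) (hsupp : support η ⊆ ball 0 r) (g : E → F) (y : E) :
    ‖(η ⋆[lsmul ℝ ℝ, μ] g) y‖ₑ ≤ ENNReal.ofReal A * ∫⁻ z in ball y r, ‖g z‖ₑ ∂μ := by
  rw [convolution_lsmul_swap, ← lintegral_const_mul' _ _ ofReal_ne_top,
    ← lintegral_indicator measurableSet_ball]
  refine (enorm_integral_le_lintegral_enorm _).trans (lintegral_mono fun z => ?_)
  by_cases hz : z ∈ ball y r
  · rw [indicator_of_mem hz, enorm_smul]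
    gcongr
    exact (ofReal_norm (η (y - z))).symm.trans_le (ENNReal.ofReal_le_ofReal (hη _))
  · have hηz : η (y - z) = 0 := notMem_support.1 fun h => hz <| by
      simpa [dist_eq_norm, norm_sub_rev] using hsupp h
    simp [hηz]

theorem sub_convolution_apply {G F : Type*} [AddGroup G] [MeasurableSpace G] {μ : Measure G}
    [NormedAddCommGroup F] [NormedSpace ℝ F] {η₁ η₂ : G → ℝ} {g : G → F} {y : G}
    (h₁ : ConvolutionExistsAt η₁ g y (lsmul ℝ ℝ) μ)
    (h₂ : ConvolutionExistsAt η₂ g y (lsmul ℝ ℝ) μ) :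
    ((η₁ - η₂) ⋆[lsmul ℝ ℝ, μ] g) y =
      (η₁ ⋆[lsmul ℝ ℝ, μ] g) y - (η₂ ⋆[lsmul ℝ ℝ, μ] g) y := by
  simp only [convolution_def, Pi.sub_apply, map_sub, sub_apply]
  exact integral_sub h₁ h₂

variable {E F : Type*} [NormedAddCommGroup E] [NormedSpace ℝ E] [MeasurableSpace E]
  [NormedAddCommGroup F] [NormedSpace ℝ F] {μ : Measure E} {Λ : ℝ≥0} {ψ : E → ℝ} {f : E → F}
  {a q s t : ℝ}

/-- The radial maximal function `sup_{s > 0} ‖ψ_s * f‖` of the theory of Hardy spaces. -/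
def radialMax (μ : Measure E) (ψ : E → ℝ) (f : E → F) (y : E) : ℝ≥0∞ :=
  ⨆ (s : ℝ) (_ : 0 < s), ‖mollify μ ψ s f y‖ₑ

/-- Peetre's maximal function `sup_{s > 0, y} ‖ψ_s * f (y)‖ / (1 + ‖x - y‖ / s) ^ a`, which controls
`f` at all scales and all places from the single point `x`. -/
def peetreMax (μ : Measure E) (ψ : E → ℝ) (f : E → F) (a : ℝ) (x : E) : ℝ≥0∞ :=
  ⨆ (s : ℝ) (_ : 0 < s) (y : E),
    ‖mollify μ ψ s f y‖ₑ / ENNReal.ofReal (1 + ‖x - y‖ / s) ^ a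

theorem enorm_mollify_le_radialMax (hs : 0 < s) (y : E) :
    ‖mollify μ ψ s f y‖ₑ ≤ radialMax μ ψ f y :=
  le_iSup₂_of_le s hs le_rfl

theorem peetreMax_le_iff (ha : 0 ≤ a) {x : E} {B : ℝ≥0∞} :
    peetreMax μ ψ f a x ≤ B ↔ ∀ s, 0 < s → ∀ y,
      ‖mollify μ ψ s f y‖ₑ ≤ B * ENNReal.ofReal (1 + ‖x - y‖ / s) ^ a := by
  simp only [peetreMax, iSup_le_iff]
  refine forall₃_congr fun s hs y => ENNReal.div_le_iff ?_ (rpow_ne_top_of_nonneg ha ofReal_ne_top)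
  have : 0 < 1 + ‖x - y‖ / s := by positivity
  exact (ENNReal.rpow_pos (by simpa using this) ofReal_ne_top).ne'

theorem enorm_mollify_le_peetreMax_mul (ha : 0 ≤ a) (hs : 0 < s) (x y : E) :
    ‖mollify μ ψ s f y‖ₑ ≤ peetreMax μ ψ f a x * ENNReal.ofReal (1 + ‖x - y‖ / s) ^ a :=
  (peetreMax_le_iff ha).1 le_rfl s hs y

theorem enorm_mollify_le_peetreMax_mul_radialMax (ha : 0 ≤ a) (hq₀ : 0 < q) (hq₁ : q ≤ 1)
    (hs : 0 < s) (x z : E) :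
    ‖mollify μ ψ s f z‖ₑ ≤ peetreMax μ ψ f a x ^ (1 - q) *
      ENNReal.ofReal (1 + ‖x - z‖ / s) ^ (a * (1 - q)) * radialMax μ ψ f z ^ q := by
  have hq : 0 ≤ 1 - q := sub_nonneg.2 hq₁
  calc ‖mollify μ ψ s f z‖ₑ = ‖mollify μ ψ s f z‖ₑ ^ (1 - q) * ‖mollify μ ψ s f z‖ₑ ^ q := by
        rw [← ENNReal.rpow_add_of_nonneg _ _ hq hq₀.le, sub_add_cancel, ENNReal.rpow_one]
    _ ≤ (peetreMax μ ψ f a x * ENNReal.ofReal (1 + ‖x - z‖ / s) ^ a) ^ (1 - q) *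
          radialMax μ ψ f z ^ q := by
        gcongr
        · exact enorm_mollify_le_peetreMax_mul ha hs x z
        · exact enorm_mollify_le_radialMax hs z
    _ = _ := by rw [ENNReal.mul_rpow_of_nonneg _ _ hq, ← ENNReal.rpow_mul]

variable [BorelSpace E]

theorem setLIntegral_ball_enorm_mollify_le (ha : 0 ≤ a) (hq₀ : 0 < q) (hq₁ : q ≤ 1) (hs : 0 < s)
    (hst : s ≤ t) {x : E} (hN : peetreMax μ ψ f a x ≠ ⊤) (y : E) :
    ∫⁻ z in ball y (2 * t), ‖mollify μ ψ s f z‖ₑ ∂μ ≤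
      peetreMax μ ψ f a x ^ (1 - q) *
        (ENNReal.ofReal (t / s) * ENNReal.ofReal (3 * (1 + ‖x - y‖ / t))) ^ (a * (1 - q)) *
          ∫⁻ z in ball y (2 * t), radialMax μ ψ f z ^ q ∂μ := by
  have ht : 0 < t := hs.trans_le hst
  have hγ : 0 ≤ a * (1 - q) := mul_nonneg ha (sub_nonneg.2 hq₁)
  rw [← lintegral_const_mul' _ _ (mul_ne_top (rpow_ne_top_of_nonneg (sub_nonneg.2 hq₁) hN)
    (rpow_ne_top_of_nonneg hγ (mul_ne_top ofReal_ne_top ofReal_ne_top)))]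
  refine setLIntegral_mono' measurableSet_ball fun z hz => ?_
  refine (enorm_mollify_le_peetreMax_mul_radialMax ha hq₀ hq₁ hs x z).trans ?_
  rw [← ENNReal.ofReal_mul (by positivity)]
  gcongr
  exact one_add_norm_sub_div_le hs hst hz

variable [FiniteDimensional ℝ E] [μ.IsAddHaarMeasure]

theorem setLIntegral_ball_le_hlMax {x y : E} (g : E → ℝ≥0∞) (ht : 0 < t) :
    ∫⁻ z in ball y (2 * t), g z ∂μ ≤
      ENNReal.ofReal (t * (3 * (1 + ‖x - y‖ / t))) ^ finrank ℝ E * μ (ball 0 1) * hlMax μ g x := by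
  have hR : 0 < t * (3 * (1 + ‖x - y‖ / t)) := by positivity
  rw [← ENNReal.ofReal_pow hR.le, ← Measure.addHaar_ball_of_pos μ x hR]
  refine (lintegral_mono_set (ball_subset_ball' ?_)).trans
    (setLIntegral_ball_le_measure_mul_hlMax g (mem_ball_self hR))
  rw [dist_comm, dist_eq_norm, show t * (3 * (1 + ‖x - y‖ / t)) = 3 * (t + ‖x - y‖) by field_simp]
  linarith [norm_nonneg (x - y)]

theorem enorm_convolution_mollify_le {η : E → ℝ} {A : ℝ} (hη : ∀ z, ‖η z‖ ≤ t⁻¹ ^ finrank ℝ E * A)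
    (hsupp : support η ⊆ ball 0 (2 * t)) (hq₀ : 0 < q) (hq₁ : q ≤ 1) (ha : a * q = finrank ℝ E)
    (hs : 0 < s) (hst : s ≤ t) {x : E} (hN : peetreMax μ ψ f a x ≠ ⊤) (y : E) :
    ‖(η ⋆[lsmul ℝ ℝ, μ] mollify μ ψ s f) y‖ₑ ≤
      ENNReal.ofReal A * ENNReal.ofReal (t / s) ^ (a * (1 - q)) *
        ENNReal.ofReal (3 * (1 + ‖x - y‖ / t)) ^ a *
          (peetreMax μ ψ f a x ^ (1 - q) * μ (ball 0 1) *
            hlMax μ (fun z => radialMax μ ψ f z ^ q) x) := by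
  have ht : 0 < t := hs.trans_le hst
  have ha₀ : 0 ≤ a := nonneg_of_mul_nonneg_left (ha ▸ Nat.cast_nonneg _) hq₀
  have hγ : 0 ≤ a * (1 - q) := mul_nonneg ha₀ (sub_nonneg.2 hq₁)
  set N := peetreMax μ ψ f a x ^ (1 - q)
  set Y := ENNReal.ofReal (3 * (1 + ‖x - y‖ / t))
  have hY : Y ^ a = Y ^ (a * (1 - q)) * Y ^ finrank ℝ E := by
    rw [← ENNReal.rpow_natCast, ← ENNReal.rpow_add_of_nonneg _ _ hγ (Nat.cast_nonneg _), ← ha]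
    congr 1
    ring
  have hscale : ENNReal.ofReal (t⁻¹ ^ finrank ℝ E * A) * ENNReal.ofReal t ^ finrank ℝ E =
      ENNReal.ofReal A := by
    rw [← ENNReal.ofReal_pow ht.le, mul_comm, ← ENNReal.ofReal_mul (by positivity), ← mul_assoc,
      ← mul_pow, mul_inv_cancel₀ ht.ne', one_pow, one_mul]
  calc ‖(η ⋆[lsmul ℝ ℝ, μ] mollify μ ψ s f) y‖ₑ
      ≤ ENNReal.ofReal (t⁻¹ ^ finrank ℝ E * A) * ∫⁻ z in ball y (2 * t), ‖mollify μ ψ s f z‖ₑ ∂μ :=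
        enorm_convolution_le_setLIntegral_ball hη hsupp _ y
    _ ≤ ENNReal.ofReal (t⁻¹ ^ finrank ℝ E * A) * (N * (ENNReal.ofReal (t / s) * Y) ^ (a * (1 - q)) *
          ∫⁻ z in ball y (2 * t), radialMax μ ψ f z ^ q ∂μ) := by
        gcongr
        exact setLIntegral_ball_enorm_mollify_le ha₀ hq₀ hq₁ hs hst hN y
    _ ≤ ENNReal.ofReal (t⁻¹ ^ finrank ℝ E * A) * (N * (ENNReal.ofReal (t / s) * Y) ^ (a * (1 - q)) *
          (ENNReal.ofReal (t * (3 * (1 + ‖x - y‖ / t))) ^ finrank ℝ E * μ (ball 0 1) *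
            hlMax μ (fun z => radialMax μ ψ f z ^ q) x)) := by
        gcongr
        exact setLIntegral_ball_le_hlMax _ ht
    _ = _ := by
        rw [hY, ← hscale, ENNReal.ofReal_mul ht.le, mul_pow, ENNReal.mul_rpow_of_nonneg _ _ hγ]
        ring

theorem measurable_radialMax (hψ : IsLipschitzMollifier μ Λ ψ) (hf : Continuous f) :
    Measurable (radialMax μ ψ f) :=
  (lowerSemicontinuous_biSup fun _ hs =>
    (hψ.continuous_mollify hs hf).enorm.lowerSemicontinuous).measurable

theorem peetreMax_le_of_norm_le [CompleteSpace F] (hψ : IsLipschitzMollifier μ Λ ψ)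
    (hf : Continuous f) {B : ℝ} (hB : ∀ y, ‖f y‖ ≤ B) (ha : 0 < a) (x : E) :
    peetreMax μ ψ f a x ≤ ENNReal.ofReal ((∫ y, ‖ψ y‖ ∂μ) * B) := by
  refine (peetreMax_le_iff ha.le).2 fun s hs y => ?_
  have hone : 1 ≤ ENNReal.ofReal (1 + ‖x - y‖ / s) ^ a :=
    ENNReal.one_le_rpow (by simpa using by positivity) ha
  refine le_mul_of_le_of_one_le ?_ hone
  rw [← ofReal_norm]
  exact ENNReal.ofReal_le_ofReal (hψ.norm_mollify_le hs hf fun y _ => hB y)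

namespace IsLipschitzMollifier

theorem support_mollify_dilate_subset (hψ : IsLipschitzMollifier μ Λ ψ) (hs : 0 < s)
    (hst : s ≤ t) : support (mollify μ ψ s (dilate ψ t)) ⊆ ball 0 (2 * t) := by
  intro z hz
  by_contra hfar
  refine hz (norm_le_zero_iff.1 ((hψ.norm_mollify_le hs (hψ.continuous_dilate t) (ε := 0)
    fun y hy => ?_).trans_eq (mul_zero _)))
  refine (norm_eq_zero.2 (notMem_support.1 fun hy' => hfar ?_)).le
  have hyt := support_dilate_subset hψ.support_subset (hs.trans_le hst) hy'
  rw [mem_ball, dist_comm] at hy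
  exact mem_ball.2 (by linarith [dist_triangle z y 0, mem_ball.1 hyt])

theorem norm_mollify_dilate_le [Nontrivial E] (hψ : IsLipschitzMollifier μ Λ ψ) (hs : 0 < s)
    (ht : 0 < t) (z : E) :
    ‖mollify μ ψ s (dilate ψ t) z‖ ≤ t⁻¹ ^ finrank ℝ E * (2 * (∫ y, ‖ψ y‖ ∂μ) * Λ) :=
  (hψ.norm_mollify_le hs (hψ.continuous_dilate t) fun y _ => hψ.norm_dilate_le ht y).trans_eq
    (by ring)

theorem norm_mollify_dilate_sub_le (hψ : IsLipschitzMollifier μ Λ ψ) {r : ℝ} (hr : 0 < r)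
    (hrs : r ≤ s) (ht : 0 < t) (z : E) :
    ‖mollify μ ψ r (dilate ψ t) z - mollify μ ψ s (dilate ψ t) z‖ ≤
      t⁻¹ ^ finrank ℝ E * (2 * (∫ y, ‖ψ y‖ ∂μ) * Λ * (s / t)) := by
  refine (hψ.norm_mollify_sub_mollify_le hr hrs (hψ.continuous_dilate t) (z := dilate ψ t z)
    (ε := t⁻¹ ^ finrank ℝ E * (Λ * (s / t))) fun y hy => ?_).trans_eq (by ring)
  refine (hψ.norm_dilate_sub_dilate_le ht y z).trans ?_
  gcongr
  exact (mem_ball_iff_norm.1 hy).le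

theorem mollify_mollify_mollify_eq [CompleteSpace F] (hψ : IsLipschitzMollifier μ Λ ψ) {r : ℝ}
    (hr : 0 < r) (hs : 0 < s) (ht : 0 < t) (hf : Continuous f) :
    mollify μ ψ r (mollify μ ψ s (mollify μ ψ t f)) =
      mollify μ ψ r (dilate ψ t) ⋆[lsmul ℝ ℝ, μ] mollify μ ψ s f := by
  rw [hψ.mollify_comm hs ht hf]
  exact hψ.mollify_convolution hr (hψ.continuous_dilate t) (hψ.hasCompactSupport_dilate ht)
    (hψ.continuous_mollify hs hf)

theorem convolutionExistsAt_mollify_dilate (hψ : IsLipschitzMollifier μ Λ ψ) {r : ℝ} (hr : 0 < r)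
    (hs : 0 < s) (ht : 0 < t) (hf : Continuous f) (y : E) :
    ConvolutionExistsAt (mollify μ ψ r (dilate ψ t)) (mollify μ ψ s f) y (lsmul ℝ ℝ) μ :=
  ((hψ.hasCompactSupport_dilate hr).convolution _
    (hψ.hasCompactSupport_dilate ht)).convolutionExists_left _
      (hψ.continuous_mollify hr (hψ.continuous_dilate t))
      (hψ.continuous_mollify hs hf).locallyIntegrable y

end IsLipschitzMollifier

section PeetreInequality

variable [CompleteSpace F]

theorem enorm_mollify_sub_mollify_le (hψ : IsLipschitzMollifier μ Λ ψ) (hf : Continuous f)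
    (hq₀ : 0 < q) (hq₁ : q ≤ 1) (ha : a * q = finrank ℝ E) {x : E}
    (hN : peetreMax μ ψ f a x ≠ ⊤) {r ρ : ℝ} (hr : 0 < r) (hrρ : r ≤ ρ) (hρt : ρ ≤ t) (hs : 0 < s)
    (hst : s ≤ t) (y : E) :
    ‖mollify μ ψ r (mollify μ ψ s (mollify μ ψ t f)) y -
        mollify μ ψ ρ (mollify μ ψ s (mollify μ ψ t f)) y‖ₑ ≤
      ENNReal.ofReal (2 * (∫ y, ‖ψ y‖ ∂μ) * Λ * (ρ / t)) *
        ENNReal.ofReal (t / s) ^ (a * (1 - q)) * ENNReal.ofReal (3 * (1 + ‖x - y‖ / t)) ^ a *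
          (peetreMax μ ψ f a x ^ (1 - q) * μ (ball 0 1) *
            hlMax μ (fun z => radialMax μ ψ f z ^ q) x) := by
  have hρ : 0 < ρ := hr.trans_le hrρ
  have ht : 0 < t := hs.trans_le hst
  have hsupp : support (mollify μ ψ r (dilate ψ t) - mollify μ ψ ρ (dilate ψ t)) ⊆ ball 0 (2 * t) :=
    (support_sub _ _).trans (union_subset (hψ.support_mollify_dilate_subset hr (hrρ.trans hρt))
      (hψ.support_mollify_dilate_subset hρ hρt))
  rw [hψ.mollify_mollify_mollify_eq hr hs ht hf, hψ.mollify_mollify_mollify_eq hρ hs ht hf,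
    ← sub_convolution_apply (hψ.convolutionExistsAt_mollify_dilate hr hs ht hf y)
      (hψ.convolutionExistsAt_mollify_dilate hρ hs ht hf y)]
  exact enorm_convolution_mollify_le (hψ.norm_mollify_dilate_sub_le hr hrρ ht) hsupp hq₀ hq₁ ha hs
    hst hN y

theorem enorm_mollify_sub_mollify_le_geometric (hψ : IsLipschitzMollifier μ Λ ψ)
    (hf : Continuous f) (hq₀ : 0 < q) (hq₁ : q ≤ 1) (ha : a * q = finrank ℝ E) {x : E}
    (hN : peetreMax μ ψ f a x ≠ ⊤) (ht : 0 < t) (y : E) (k : ℕ)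
    (hs : s ∈ ({t / 2 ^ k, t / 2 ^ (k + 1)} : Set ℝ)) :
    ‖mollify μ ψ (t / 2 ^ (k + 1)) (mollify μ ψ s (mollify μ ψ t f)) y -
        mollify μ ψ (t / 2 ^ k) (mollify μ ψ s (mollify μ ψ t f)) y‖ₑ ≤
      ENNReal.ofReal (2 * (∫ y, ‖ψ y‖ ∂μ) * Λ) * 2 ^ (a * (1 - q)) *
        ENNReal.ofReal (3 * (1 + ‖x - y‖ / t)) ^ a *
          (peetreMax μ ψ f a x ^ (1 - q) * μ (ball 0 1) *
            hlMax μ (fun z => radialMax μ ψ f z ^ q) x) * (2⁻¹ * 2 ^ (a * (1 - q))) ^ k := by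
  have hγ : 0 ≤ a * (1 - q) := mul_nonneg
    (nonneg_of_mul_nonneg_left (ha ▸ Nat.cast_nonneg _) hq₀) (sub_nonneg.2 hq₁)
  have hscale (j : ℕ) : t / 2 ^ j ≤ t := div_le_self ht.le (one_le_pow₀ one_le_two)
  have hmono : t / 2 ^ (k + 1) ≤ t / 2 ^ k := by gcongr <;> norm_num
  have hs_ge : t / 2 ^ (k + 1) ≤ s := by rcases hs with rfl | rfl <;> simp [hmono]
  have hs_le : s ≤ t := by rcases hs with rfl | rfl <;> exact hscale _
  have hs₀ : 0 < s := lt_of_lt_of_le (by positivity) hs_ge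
  have hratio : ENNReal.ofReal (t / s) ^ (a * (1 - q)) ≤
      2 ^ (a * (1 - q)) * (2 ^ (a * (1 - q))) ^ k := by
    rw [← pow_succ', ← ENNReal.rpow_mul_natCast, mul_comm (a * (1 - q)), ENNReal.rpow_natCast_mul]
    gcongr
    refine ENNReal.ofReal_le_of_le_toReal ?_
    rw [toReal_pow, toReal_ofNat]
    exact (div_le_comm₀ (by positivity) hs₀).1 hs_ge
  have hgain : ENNReal.ofReal (2 * (∫ y, ‖ψ y‖ ∂μ) * Λ * (t / 2 ^ k / t)) =
      ENNReal.ofReal (2 * (∫ y, ‖ψ y‖ ∂μ) * Λ) * 2⁻¹ ^ k := by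
    rw [ENNReal.ofReal_mul' (by positivity), div_right_comm, div_self ht.ne', one_div, ← inv_pow,
      ENNReal.ofReal_pow (by positivity), ENNReal.ofReal_inv_of_pos two_pos, ENNReal.ofReal_ofNat]
  refine (enorm_mollify_sub_mollify_le hψ hf hq₀ hq₁ ha hN (by positivity) hmono (hscale k) hs₀
    hs_le y).trans ?_
  rw [hgain, mul_pow]
  refine (mul_le_mul_left (mul_le_mul_left (mul_le_mul_right hratio _) _) _).trans_eq ?_
  ring

theorem enorm_mollify_le_peetreMax_rpow_mul_hlMax [Nontrivial E] (hψ : IsLipschitzMollifier μ Λ ψ)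
    (hf : Continuous f) (hq₀ : 0 < q) (hq₁ : q ≤ 1) (ha : a * q = finrank ℝ E) {x : E}
    (hN : peetreMax μ ψ f a x ≠ ⊤) (ht : 0 < t) (y : E) :
    ‖mollify μ ψ t f y‖ₑ ≤
      ENNReal.ofReal (2 * (∫ y, ‖ψ y‖ ∂μ) * Λ) *
        (1 + 2 * (2 ^ (a * (1 - q)) * (1 - 2⁻¹ * 2 ^ (a * (1 - q)))⁻¹)) *
        ENNReal.ofReal (3 * (1 + ‖x - y‖ / t)) ^ a *
          (peetreMax μ ψ f a x ^ (1 - q) * μ (ball 0 1) *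
            hlMax μ (fun z => radialMax μ ψ f z ^ q) x) := by
  refine (hψ.enorm_le_enorm_mollify_add_tsum ht (hψ.continuous_mollify ht hf)
    fun k s hs => enorm_mollify_sub_mollify_le_geometric hψ hf hq₀ hq₁ ha hN ht y k hs).trans ?_
  rw [ENNReal.tsum_mul_left, ENNReal.tsum_geometric, hψ.mollify_mollify_mollify_eq ht ht ht hf]
  have hmain := enorm_convolution_mollify_le (hψ.norm_mollify_dilate_le ht ht)
    (hψ.support_mollify_dilate_subset ht le_rfl) hq₀ hq₁ ha ht le_rfl hN y
  rw [div_self ht.ne', ENNReal.ofReal_one, ENNReal.one_rpow, mul_one] at hmain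
  refine (add_le_add_left hmain _).trans_eq ?_
  ring

theorem exists_peetreMax_rpow_le_mul_hlMax [Nontrivial E] (hψ : IsLipschitzMollifier μ Λ ψ)
    (hq₀ : 0 < q) (hq₁ : q ≤ 1) (ha : a * q = finrank ℝ E) (haq : a * (1 - q) < 1) :
    ∃ C : ℝ≥0∞, C ≠ ⊤ ∧ ∀ f : E → F, Continuous f → (∃ B, ∀ y, ‖f y‖ ≤ B) → ∀ x,
      peetreMax μ ψ f a x ^ q ≤ C * hlMax μ (fun z => radialMax μ ψ f z ^ q) x := by
  have hθ : (2 : ℝ≥0∞)⁻¹ * 2 ^ (a * (1 - q)) < 1 := by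
    rw [mul_comm, ← div_eq_mul_inv]
    refine ENNReal.div_lt_of_lt_mul ?_
    rw [one_mul]
    exact (ENNReal.rpow_lt_rpow_of_exponent_lt one_lt_two ofNat_ne_top haq).trans_eq
      (ENNReal.rpow_one 2)
  have ha₀ : 0 < a := pos_of_mul_pos_left (ha ▸ Nat.cast_pos.2 finrank_pos) hq₀.le
  set A : ℝ≥0∞ := ENNReal.ofReal (2 * (∫ y, ‖ψ y‖ ∂μ) * Λ) *
    (1 + 2 * (2 ^ (a * (1 - q)) * (1 - 2⁻¹ * 2 ^ (a * (1 - q)))⁻¹)) with hA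
  have hA_top : A ≠ ⊤ := by
    have : (1 - (2 : ℝ≥0∞)⁻¹ * 2 ^ (a * (1 - q)))⁻¹ ≠ ⊤ :=
      ENNReal.inv_ne_top.2 (tsub_pos_of_lt hθ).ne'
    finiteness
  refine ⟨A * 3 ^ a * μ (ball 0 1), by finiteness, fun f hf ⟨B, hB⟩ x => ?_⟩
  set N := peetreMax μ ψ f a x
  set M := hlMax μ (fun z => radialMax μ ψ f z ^ q) x
  have hN : N ≠ ⊤ := ne_top_of_le_ne_top ofReal_ne_top (peetreMax_le_of_norm_le hψ hf hB ha₀ x)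
  have hself : N ≤ A * 3 ^ a * μ (ball 0 1) * M * N ^ (1 - q) := by
    refine (peetreMax_le_iff ha₀.le).2 fun t ht y => ?_
    refine (enorm_mollify_le_peetreMax_rpow_mul_hlMax hψ hf hq₀ hq₁ ha hN ht y).trans_eq ?_
    rw [← hA, ENNReal.ofReal_mul zero_le_three, ENNReal.ofReal_ofNat,
      ENNReal.mul_rpow_of_nonneg _ _ ha₀.le]
    ring
  exact rpow_le_of_le_mul_rpow_one_sub hN hq₀ hq₁ hself

theorem exists_lintegral_peetreMax_rpow_le [Nontrivial E] (hψ : IsLipschitzMollifier μ Λ ψ)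
    {p : ℝ} (hq₀ : 0 < q) (hq₁ : q ≤ 1) (hqp : q < p) (ha : a * q = finrank ℝ E)
    (haq : a * (1 - q) < 1) :
    ∃ C : ℝ≥0∞, C ≠ ⊤ ∧ ∀ f : E → F, Continuous f → (∃ B, ∀ y, ‖f y‖ ≤ B) →
      ∫⁻ x, peetreMax μ ψ f a x ^ p ∂μ ≤ C * ∫⁻ x, radialMax μ ψ f x ^ p ∂μ := by
  obtain ⟨C, hC, hpeetre⟩ := exists_peetreMax_rpow_le_mul_hlMax (F := F) hψ hq₀ hq₁ ha haq
  have hr : 1 < p / q := (one_lt_div hq₀).2 hqp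
  have hpow (v : ℝ≥0∞) : (v ^ q) ^ (p / q) = v ^ p := by
    rw [← ENNReal.rpow_mul, mul_div_cancel₀ _ hq₀.ne']
  have hCr : C ^ (p / q) ≠ ⊤ := rpow_ne_top_of_nonneg (zero_le_one.trans hr.le) hC
  refine ⟨C ^ (p / q) * (2 ^ (p / q) * 4 ^ finrank ℝ E * ENNReal.ofReal (p / q / (p / q - 1))),
    by finiteness, fun f hf hB => ?_⟩
  calc ∫⁻ x, peetreMax μ ψ f a x ^ p ∂μ
      ≤ ∫⁻ x, C ^ (p / q) * hlMax μ (fun z => radialMax μ ψ f z ^ q) x ^ (p / q) ∂μ := by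
        refine lintegral_mono fun x => ?_
        rw [← hpow, ← ENNReal.mul_rpow_of_nonneg _ _ (zero_le_one.trans hr.le)]
        gcongr
        exact hpeetre f hf hB x
    _ = C ^ (p / q) * ∫⁻ x, hlMax μ (fun z => radialMax μ ψ f z ^ q) x ^ (p / q) ∂μ :=
        lintegral_const_mul' _ _ hCr
    _ ≤ _ := by
        rw [mul_assoc]
        gcongr
        simpa only [hpow] using
          lintegral_hlMax_rpow_le (μ := μ) ((measurable_radialMax hψ hf).pow_const q) hr

end PeetreInequality

end MaximalFunctions

/-! ### Exterior corkscrews -/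

section ExteriorCorkscrew

/-- The exterior corkscrew condition: from every point `x` of `Ω` at distance `d` from the boundary,
one reaches within distance `D * d` the centre of a ball of radius `c * d` missing `Ω`. -/
def HasExteriorCorkscrew {X : Type*} [PseudoMetricSpace X] (D c : ℝ) (Ω : Set X) : Prop :=
  ∀ x ∈ Ω, ∃ w, dist x w ≤ D * infDist x (frontier Ω) ∧
    Disjoint (ball w (c * infDist x (frontier Ω))) Ω

theorem infDist_frontier_pos {E : Type*} [NormedAddCommGroup E] [NormedSpace ℝ E] {Ω : Set E}
    (hΩ : IsOpen Ω) (hne : Ω ≠ univ) {x : E} (hx : x ∈ Ω) : 0 < infDist x (frontier Ω) :=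
  (isClosed_frontier.notMem_iff_infDist_pos (nonempty_frontier_iff.2 ⟨⟨x, hx⟩, hne⟩)).1 fun h =>
    (hΩ.frontier_eq ▸ h).2 hx

variable {m : ℕ}

theorem dist_le_dist_of_castSucc_eq {p q : EuclideanSpace ℝ (Fin (m + 1))}
    {y z : EuclideanSpace ℝ (Fin m)} (hp : ∀ i : Fin m, p i.castSucc = y i)
    (hq : ∀ i : Fin m, q i.castSucc = z i) : dist y z ≤ dist p q := by
  rw [EuclideanSpace.dist_eq, EuclideanSpace.dist_eq, Fin.sum_univ_castSucc]
  simp only [hp, hq]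
  exact Real.sqrt_le_sqrt (le_add_of_nonneg_right (sq_nonneg _))

theorem lt_mul_dist_add_single_of_lt_graph {L : ℝ≥0} {h : EuclideanSpace ℝ (Fin m) → ℝ}
    {s : Set (EuclideanSpace ℝ (Fin m))} (hh : LipschitzOnWith L h s)
    {p q : EuclideanSpace ℝ (Fin (m + 1))} {y z : EuclideanSpace ℝ (Fin m)} (hy : y ∈ s)
    (hz : z ∈ s) (hp : ∀ i : Fin m, p i.castSucc = y i) (hp_last : p (Fin.last m) < h y)
    (hq : ∀ i : Fin m, q i.castSucc = z i) (hq_last : q (Fin.last m) = h z) (ρ : ℝ) :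
    ρ < (1 + L) * dist p (q + EuclideanSpace.single (Fin.last m) ρ) := by
  set w := q + EuclideanSpace.single (Fin.last m) ρ with hw
  have hhoriz : dist y z ≤ dist p w := dist_le_dist_of_castSucc_eq hp fun i => by
    simp [hw, hq, (Fin.castSucc_lt_last i).ne]
  have hvert : h z + ρ - p (Fin.last m) ≤ dist p w := by
    have hw_last : w (Fin.last m) = h z + ρ := by simp [hw, hq_last]
    rw [dist_comm, dist_eq_norm, ← hw_last]
    exact (le_abs_self _).trans (PiLp.norm_apply_le (w - p) (Fin.last m))
  have hlip : h y - h z ≤ L * dist p w := by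
    refine (le_abs_self _).trans ((hh.dist_le_mul y hy z hz).trans ?_)
    gcongr
  linarith

theorem IsLipschitzGraphNbhd.exists_ball_disjoint {L δ : ℝ}
    {Ω U : Set (EuclideanSpace ℝ (Fin (m + 1)))} (hU : IsLipschitzGraphNbhd m L δ Ω U)
    {z : EuclideanSpace ℝ (Fin (m + 1))} (hz : z ∈ frontier Ω) {ρ : ℝ} (hρ : 0 < ρ)
    (hball : ball z (2 * ρ) ⊆ U) :
    ∃ w, dist z w = ρ ∧ Disjoint (ball w ((1 + (L.toNNReal : ℝ))⁻¹ * ρ)) Ω := by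
  obtain ⟨A, h, hh, hgraph, hbelow⟩ := hU
  obtain ⟨y₀, hy₀, hcoord₀, hlast₀⟩ : A z ∈ _ :=
    hgraph.subset ⟨z, ⟨hball (mem_ball_self (by positivity)), hz⟩, rfl⟩
  set w := A.symm (A z + EuclideanSpace.single (Fin.last m) ρ)
  have hAw : A w = A z + EuclideanSpace.single (Fin.last m) ρ := A.apply_symm_apply _
  have hzw : dist z w = ρ := by
    rw [← A.isometry.dist_eq, hAw, dist_self_add_right, PiLp.norm_single,
      Real.norm_of_nonneg hρ.le]
  refine ⟨w, hzw, disjoint_left.2 fun v hv hvΩ => ?_⟩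
  have hL : (1 + (L.toNNReal : ℝ))⁻¹ ≤ 1 := inv_le_one_of_one_le₀ (by simp)
  have hvU : v ∈ U := hball <| mem_ball.2 <| by
    nlinarith [dist_triangle_right v z w, mem_ball.1 hv]
  obtain ⟨y, hy, hcoord, hlast⟩ := hbelow (A v) ⟨v, ⟨hvU, hvΩ⟩, rfl⟩
  have hfar := lt_mul_dist_add_single_of_lt_graph hh hy hy₀ hcoord hlast hcoord₀ hlast₀ ρ
  rw [← hAw, A.isometry.dist_eq, ← inv_mul_lt_iff₀ (by positivity)] at hfar
  exact hfar.not_ge (mem_ball.1 hv).le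

theorem IsLipschitzDomain.ne_univ {Ω : Set (EuclideanSpace ℝ (Fin (m + 1)))}
    (hΩ : IsLipschitzDomain m Ω) : Ω ≠ univ := by
  rintro rfl
  exact NormedSpace.unbounded_univ ℝ _ hΩ.2.2.1

theorem IsLipschitzDomain.exists_ball_subset_graphNbhd
    {Ω : Set (EuclideanSpace ℝ (Fin (m + 1)))} (hΩ : IsLipschitzDomain m Ω) :
    ∃ L δ ε : ℝ, 0 < ε ∧
      ∀ z ∈ frontier Ω, ∃ U, ball z ε ⊆ U ∧ IsLipschitzGraphNbhd m L δ Ω U := by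
  obtain ⟨-, -, hbdd, L, δ, -, -, hloc⟩ := hΩ
  obtain ⟨ε, hε, hleb⟩ := lebesgue_number_lemma_of_metric_sUnion
    (c := {U | IsOpen U ∧ IsLipschitzGraphNbhd m L δ Ω U})
    (hbdd.isCompact_closure.of_isClosed_subset isClosed_frontier frontier_subset_closure)
    (fun U hU => hU.1) fun z hz => by
      obtain ⟨U, hUo, hzU, hU⟩ := hloc z hz
      exact ⟨U, ⟨hUo, hU⟩, hzU⟩
  exact ⟨L, δ, ε, hε, fun z hz =>
    let ⟨U, ⟨_, hU⟩, hball⟩ := hleb z hz; ⟨U, hball, hU⟩⟩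

theorem IsLipschitzDomain.exists_hasExteriorCorkscrew
    {Ω : Set (EuclideanSpace ℝ (Fin (m + 1)))} (hΩ : IsLipschitzDomain m Ω) :
    ∃ c, 0 < c ∧ HasExteriorCorkscrew 2 c Ω := by
  obtain ⟨L, δ, ε, hε, hnbhd⟩ := hΩ.exists_ball_subset_graphNbhd
  have hfr : (frontier Ω).Nonempty := nonempty_frontier_iff.2 ⟨hΩ.2.1.nonempty, hΩ.ne_univ⟩
  obtain ⟨B, hB, hd_le⟩ : ∃ B > 0, ∀ x ∈ Ω, infDist x (frontier Ω) ≤ B := by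
    refine ⟨diam (closure Ω) + 1, by positivity, fun x hx => ?_⟩
    obtain ⟨z, hz⟩ := hfr
    have := dist_le_diam_of_mem hΩ.2.2.1.closure (subset_closure hx) (frontier_subset_closure hz)
    linarith [infDist_le_dist_of_mem (x := x) hz]
  set κ := min 1 (ε / (2 * B))
  have hκ₀ : 0 < κ := by positivity
  have hκε : 2 * (κ * B) ≤ ε := by
    have : κ ≤ ε / (2 * B) := min_le_right _ _
    rw [le_div_iff₀ (by positivity)] at this
    linarith
  refine ⟨(1 + (L.toNNReal : ℝ))⁻¹ * κ, by positivity, fun x hx => ?_⟩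
  have hd := infDist_frontier_pos hΩ.1 hΩ.ne_univ hx
  obtain ⟨z, hz, hxz⟩ := isClosed_frontier.exists_infDist_eq_dist hfr x
  set d := infDist x (frontier Ω)
  obtain ⟨U, hball, hU⟩ := hnbhd z hz
  have hscale : 2 * (κ * d) ≤ ε := by
    refine le_trans ?_ hκε
    gcongr
    exact hd_le x hx
  obtain ⟨w, hzw, hdisj⟩ :=
    hU.exists_ball_disjoint hz (mul_pos hκ₀ hd) ((ball_subset_ball hscale).trans hball)
  refine ⟨w, ?_, by rwa [mul_assoc]⟩
  have hκd : κ * d ≤ d := mul_le_of_le_one_left hd.le (min_le_left _ _)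
  linarith [dist_triangle x z w]

end ExteriorCorkscrew

/-! ### Pointwise control by Peetre's maximal function of the derivative -/

section PointwiseBound

variable {E F : Type*} [NormedAddCommGroup E] [NormedSpace ℝ E] [FiniteDimensional ℝ E]
  [MeasurableSpace E] [BorelSpace E] [NormedAddCommGroup F] [NormedSpace ℝ F]
  {μ : Measure E} [μ.IsAddHaarMeasure] {Λ : ℝ≥0} {ψ : E → ℝ} {u : E → F} {a s : ℝ} {x : E}

theorem IsLipschitzMollifier.hasFDerivAt_mollify (hψ : IsLipschitzMollifier μ Λ ψ)
    (hu : ContDiff ℝ 1 u) (huc : HasCompactSupport u) (s : ℝ) (y : E) :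
    HasFDerivAt (mollify μ ψ s u) (mollify μ ψ s (fderiv ℝ u) y) y :=
  huc.hasFDerivAt_convolution_right (lsmul ℝ ℝ) (hψ.continuous_dilate s).locallyIntegrable hu y

variable {P : ℝ}

theorem norm_mollify_apply_sub_le (hψ : IsLipschitzMollifier μ Λ ψ) (hu : ContDiff ℝ 1 u)
    (huc : HasCompactSupport u) (ha : 0 ≤ a) (hs : 0 < s)
    (hP : ∀ y, ‖mollify μ ψ s (fderiv ℝ u) y‖ ≤ P * (1 + ‖x - y‖ / s) ^ a) {R : ℝ} {y z : E}
    (hy : y ∈ closedBall x R) (hz : z ∈ closedBall x R) :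
    ‖mollify μ ψ s u y - mollify μ ψ s u z‖ ≤ P * (1 + R / s) ^ a * ‖y - z‖ := by
  have hP₀ : 0 ≤ P := by simpa using (norm_nonneg _).trans (hP x)
  refine (convex_closedBall x R).norm_image_sub_le_of_norm_hasFDerivWithin_le
    (fun v _ => (hψ.hasFDerivAt_mollify hu huc s v).hasFDerivWithinAt) (fun v hv => ?_) hz hy
  rw [mem_closedBall', dist_eq_norm] at hv
  refine (hP v).trans ?_
  gcongr

variable [CompleteSpace F]

theorem norm_mollify_mollify_le_of_eqOn_zero (hψ : IsLipschitzMollifier μ Λ ψ)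
    (hu : ContDiff ℝ 1 u) (huc : HasCompactSupport u) (ha : 0 ≤ a) {T R : ℝ} (hT : 0 < T)
    (hP : ∀ y, ‖mollify μ ψ T (fderiv ℝ u) y‖ ≤ P * (1 + ‖x - y‖ / T) ^ a) {w : E}
    (hw : dist x w ≤ R) (hu₀ : EqOn u 0 (ball w T)) :
    ‖mollify μ ψ T (mollify μ ψ T u) x‖ ≤
      (∫ y, ‖ψ y‖ ∂μ) * (P * (1 + (R + T) / T) ^ a * (R + T)) := by
  have hP₀ : 0 ≤ P := by simpa using (norm_nonneg _).trans (hP x)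
  have hR : 0 ≤ R := dist_nonneg.trans hw
  have hw₀ : mollify μ ψ T u w = 0 := by
    have hle := hψ.norm_mollify_le hT hu.continuous (x := w) (ε := 0) fun y hy => by
      simp [hu₀ hy]
    exact norm_le_zero_iff.1 (hle.trans_eq (mul_zero _))
  refine hψ.norm_mollify_le hT (hψ.continuous_mollify hT hu.continuous) fun y hy => ?_
  have hyw : ‖y - w‖ ≤ R + T := by
    rw [← dist_eq_norm]
    linarith [dist_triangle y x w, mem_ball.1 hy]
  have hdiff := norm_mollify_apply_sub_le hψ hu huc ha hT hP (R := R + T)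
    (mem_closedBall.2 (by linarith [mem_ball.1 hy]))
    (mem_closedBall'.2 (by linarith : dist x w ≤ _))
  rw [hw₀, sub_zero] at hdiff
  refine hdiff.trans ?_
  gcongr

theorem norm_mollify_sub_mollify_mollify_le (hψ : IsLipschitzMollifier μ Λ ψ)
    (hu : ContDiff ℝ 1 u) (huc : HasCompactSupport u) (ha : 0 ≤ a) (hs : 0 < s)
    (hP : ∀ y, ‖mollify μ ψ s (fderiv ℝ u) y‖ ≤ P * (1 + ‖x - y‖ / s) ^ a) {r ρ : ℝ} (hr : 0 < r)
    (hrρ : r ≤ ρ) (hρs : ρ ≤ 2 * s) :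
    ‖mollify μ ψ r (mollify μ ψ s u) x - mollify μ ψ ρ (mollify μ ψ s u) x‖ ≤
      2 * (∫ y, ‖ψ y‖ ∂μ) * (P * 3 ^ a * ρ) := by
  have hP₀ : 0 ≤ P := by simpa using (norm_nonneg _).trans (hP x)
  have hρ : 0 < ρ := hr.trans_le hrρ
  have hratio : 1 + ρ / s ≤ 3 := by linarith [(div_le_iff₀ hs).2 hρs]
  refine hψ.norm_mollify_sub_mollify_le hr hrρ (hψ.continuous_mollify hs hu.continuous)
    (z := mollify μ ψ s u x) fun y hy => ?_
  refine (norm_mollify_apply_sub_le hψ hu huc ha hs hP (ball_subset_closedBall hy)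
    (mem_closedBall_self hρ.le)).trans ?_
  gcongr
  exact (mem_ball_iff_norm.1 hy).le

theorem norm_le_of_eqOn_zero_ball (hψ : IsLipschitzMollifier μ Λ ψ) (hu : ContDiff ℝ 1 u)
    (huc : HasCompactSupport u) (ha : 0 ≤ a)
    (hP : ∀ s, 0 < s → ∀ y, ‖mollify μ ψ s (fderiv ℝ u) y‖ ≤ P * (1 + ‖x - y‖ / s) ^ a)
    {T R : ℝ} (hT : 0 < T) {w : E} (hw : dist x w ≤ R) (hu₀ : EqOn u 0 (ball w T)) :
    ‖u x‖ ≤ (∫ y, ‖ψ y‖ ∂μ) * P * ((1 + (R + T) / T) ^ a * (R + T) + 8 * 3 ^ a * T) := by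
  set K := ∫ y, ‖ψ y‖ ∂μ with hK
  have hP₀ : 0 ≤ P := by simpa using (norm_nonneg _).trans (hP T hT x)
  have hfar := norm_mollify_mollify_le_of_eqOn_zero hψ hu huc ha hT (hP T hT) hw hu₀
  have hsum := hψ.enorm_le_enorm_mollify_add_tsum hT hu.continuous (x := x)
    (b := fun k => ENNReal.ofReal (2 * K * (P * 3 ^ a * T)) * 2⁻¹ ^ k) fun k s hs => by
      have hmono : T / 2 ^ (k + 1) ≤ T / 2 ^ k := by gcongr <;> norm_num
      have hs₁ : T / 2 ^ (k + 1) ≤ s := by rcases hs with rfl | rfl <;> simp [hmono]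
      have hs₀ : 0 < s := lt_of_lt_of_le (by positivity) hs₁
      have hs₂ : T / 2 ^ k ≤ 2 * s := by
        rw [pow_succ, ← div_div, div_le_iff₀ two_pos] at hs₁
        linarith
      have hstep := norm_mollify_sub_mollify_mollify_le hψ hu huc ha hs₀ (hP s hs₀)
        (by positivity) hmono hs₂
      rw [← ofReal_norm, ← ENNReal.ofReal_ofNat 2, ← ENNReal.ofReal_inv_of_pos two_pos,
        ← ENNReal.ofReal_pow (by positivity), ← ENNReal.ofReal_mul (by positivity)]
      refine ENNReal.ofReal_le_ofReal (hstep.trans_eq ?_)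
      rw [div_eq_mul_inv, inv_pow, hK]
      ring
  rw [ENNReal.tsum_mul_left, ENNReal.tsum_geometric, ENNReal.one_sub_inv_two, inv_inv,
    ← ofReal_norm, ← ofReal_norm, ← ENNReal.ofReal_ofNat 2, ← ENNReal.ofReal_mul (by positivity),
    ← ENNReal.ofReal_mul two_pos.le, ← ENNReal.ofReal_add (norm_nonneg _) (by positivity),
    ENNReal.ofReal_le_ofReal_iff (by positivity)] at hsum
  linarith

theorem ofReal_norm_div_le_mul_peetreMax (hψ : IsLipschitzMollifier μ Λ ψ) (hu : ContDiff ℝ 1 u)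
    (huc : HasCompactSupport u) (ha : 0 < a) {D c d : ℝ} (hc : 0 < c) (hd : 0 < d) {w : E}
    (hw : dist x w ≤ D * d) (hu₀ : EqOn u 0 (ball w (c * d))) :
    ENNReal.ofReal (‖u x‖ / d) ≤
      ENNReal.ofReal ((∫ y, ‖ψ y‖ ∂μ) * ((1 + (D + c) / c) ^ a * (D + c) + 8 * 3 ^ a * c)) *
        peetreMax μ ψ (fderiv ℝ u) a x := by
  have hdu : Continuous (fderiv ℝ u) := hu.continuous_fderiv one_ne_zero
  obtain ⟨B, hB⟩ := hdu.bounded_above_of_compact_support (huc.fderiv ℝ)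
  have hN : peetreMax μ ψ (fderiv ℝ u) a x ≠ ⊤ :=
    ne_top_of_le_ne_top ofReal_ne_top (peetreMax_le_of_norm_le hψ hdu hB ha x)
  have hP (s : ℝ) (hs : 0 < s) (y : E) : ‖mollify μ ψ s (fderiv ℝ u) y‖ ≤
      (peetreMax μ ψ (fderiv ℝ u) a x).toReal * (1 + ‖x - y‖ / s) ^ a := by
    rw [← ENNReal.ofReal_le_ofReal_iff (by positivity), ofReal_norm,
      ENNReal.ofReal_mul toReal_nonneg, ENNReal.ofReal_toReal hN,
      ← ENNReal.ofReal_rpow_of_nonneg (by positivity) ha.le]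
    exact enorm_mollify_le_peetreMax_mul ha.le hs x y
  have hbound := norm_le_of_eqOn_zero_ball hψ hu huc ha.le hP (mul_pos hc hd) hw hu₀
  rw [← add_mul, mul_div_mul_right _ _ hd.ne'] at hbound
  rw [← ENNReal.ofReal_toReal hN, ← ENNReal.ofReal_mul' toReal_nonneg]
  refine ENNReal.ofReal_le_ofReal ((div_le_iff₀ hd).2 (hbound.trans_eq ?_))
  ring

end PointwiseBound

/-! ### Hardy's inequality -/

section HardyInequality

theorem rpow_sum_le_card_rpow_mul_sum_rpow {ι : Type*} (s : Finset ι) (f : ι → ℝ≥0∞) {p : ℝ}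
    (hp : 0 < p) : (∑ i ∈ s, f i) ^ p ≤ (s.card : ℝ≥0∞) ^ p * ∑ i ∈ s, f i ^ p := by
  rcases s.eq_empty_or_nonempty with rfl | hs
  · simp [hp]
  · obtain ⟨i, hi, hmax⟩ := s.exists_max_image f hs
    calc (∑ j ∈ s, f j) ^ p ≤ (s.card * f i) ^ p := by
          gcongr
          simpa using s.sum_le_card_nsmul f (f i) hmax
      _ = (s.card : ℝ≥0∞) ^ p * f i ^ p := ENNReal.mul_rpow_of_nonneg _ _ hp.le
      _ ≤ (s.card : ℝ≥0∞) ^ p * ∑ j ∈ s, f j ^ p := by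
          gcongr
          exact Finset.single_le_sum (f := fun j => f j ^ p) (fun _ _ => zero_le) hi

theorem enorm_le_sum_enorm_apply_single {ι F : Type*} [Fintype ι] [DecidableEq ι]
    [NormedAddCommGroup F] [NormedSpace ℝ F] (T : EuclideanSpace ℝ ι →L[ℝ] F) :
    ‖T‖ₑ ≤ ∑ i, ‖T (EuclideanSpace.single i 1)‖ₑ := by
  have hT : ‖T‖ ≤ ∑ i, ‖T (EuclideanSpace.single i 1)‖ := by
    refine T.opNorm_le_bound (Finset.sum_nonneg fun i _ => norm_nonneg _) fun v => ?_
    have hv : ∑ i, v i • EuclideanSpace.single i (1 : ℝ) = v := by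
      simpa using (EuclideanSpace.basisFun ι ℝ).sum_repr v
    calc ‖T v‖ = ‖∑ i, v i • T (EuclideanSpace.single i 1)‖ := by
          conv_lhs => rw [← hv, map_sum]
          simp only [map_smul]
      _ ≤ ∑ i, ‖T (EuclideanSpace.single i 1)‖ * ‖v‖ := by
          refine norm_sum_le_of_le _ fun i _ => ?_
          rw [norm_smul, mul_comm]
          gcongr
          exact PiLp.norm_apply_le v i
      _ = _ := (Finset.sum_mul ..).symm
  simp only [← ofReal_norm]
  rw [← ENNReal.ofReal_sum_of_nonneg fun i _ => norm_nonneg _]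
  exact ENNReal.ofReal_le_ofReal hT

section CorkscrewDomain

variable {E F : Type*} [NormedAddCommGroup E] [NormedSpace ℝ E] [FiniteDimensional ℝ E]
  [Nontrivial E] [MeasurableSpace E] [BorelSpace E] [NormedAddCommGroup F] [NormedSpace ℝ F]
  [CompleteSpace F] {μ : Measure E} [μ.IsAddHaarMeasure] {Λ : ℝ≥0} {ψ : E → ℝ} {Ω : Set E}

theorem exists_lintegral_div_infDist_rpow_le (hψ : IsLipschitzMollifier μ Λ ψ) {p : ℝ}
    (hp : (finrank ℝ E : ℝ) / (finrank ℝ E + 1) < p) (hΩ : IsOpen Ω) (hne : Ω ≠ univ) {D c : ℝ}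
    (hc : 0 < c) (hcork : HasExteriorCorkscrew D c Ω) :
    ∃ C : ℝ≥0∞, C ≠ ⊤ ∧ ∀ u : E → F, ContDiff ℝ 1 u → HasCompactSupport u → support u ⊆ Ω →
      ∫⁻ x in Ω, ENNReal.ofReal (‖u x‖ / infDist x (frontier Ω)) ^ p ∂μ ≤
        C * ∫⁻ x, radialMax μ ψ (fderiv ℝ u) x ^ p ∂μ := by
  have hn : (0 : ℝ) < finrank ℝ E := Nat.cast_pos.2 finrank_pos
  have hn₁ : (finrank ℝ E : ℝ) / (finrank ℝ E + 1) < 1 := by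
    rw [div_lt_one (by positivity)]
    exact lt_add_one _
  obtain ⟨q, hq, hqp⟩ := exists_between (lt_min hp hn₁)
  have hq₀ : 0 < q := lt_trans (by positivity) hq
  have hp₀ : 0 < p := hq₀.trans (hqp.trans_le (min_le_left _ _))
  have haq : finrank ℝ E / q * (1 - q) < 1 := by
    rw [div_lt_iff₀ (by positivity)] at hq
    rw [div_mul_eq_mul_div, div_lt_one hq₀]
    linarith
  have ha : 0 < finrank ℝ E / q := by positivity
  obtain ⟨C, hC, hpeetre⟩ := exists_lintegral_peetreMax_rpow_le (F := E →L[ℝ] F) hψ hq₀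
    (hqp.le.trans (min_le_right _ _)) (hqp.trans_le (min_le_left _ _)) (div_mul_cancel₀ _ hq₀.ne')
    haq
  set a := finrank ℝ E / q
  set A := ENNReal.ofReal
    ((∫ y, ‖ψ y‖ ∂μ) * ((1 + (D + c) / c) ^ a * (D + c) + 8 * 3 ^ a * c))
  refine ⟨A ^ p * C, by finiteness, fun u hu huc hsupp => ?_⟩
  have hdu : Continuous (fderiv ℝ u) := hu.continuous_fderiv one_ne_zero
  calc ∫⁻ x in Ω, ENNReal.ofReal (‖u x‖ / infDist x (frontier Ω)) ^ p ∂μ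
      ≤ ∫⁻ x in Ω, A ^ p * peetreMax μ ψ (fderiv ℝ u) a x ^ p ∂μ := by
        refine setLIntegral_mono' hΩ.measurableSet fun x hx => ?_
        obtain ⟨w, hw, hdisj⟩ := hcork x hx
        rw [← ENNReal.mul_rpow_of_nonneg _ _ hp₀.le]
        gcongr
        exact ofReal_norm_div_le_mul_peetreMax hψ hu huc ha hc (infDist_frontier_pos hΩ hne hx) hw
          fun v hv => notMem_support.1 fun hv' => disjoint_left.1 hdisj hv (hsupp hv')
    _ ≤ ∫⁻ x, A ^ p * peetreMax μ ψ (fderiv ℝ u) a x ^ p ∂μ := setLIntegral_le_lintegral _ _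
    _ = A ^ p * ∫⁻ x, peetreMax μ ψ (fderiv ℝ u) a x ^ p ∂μ :=
        lintegral_const_mul' _ _ (by finiteness)
    _ ≤ A ^ p * C * ∫⁻ x, radialMax μ ψ (fderiv ℝ u) x ^ p ∂μ := by
        rw [mul_assoc]
        gcongr
        exact hpeetre _ hdu (hdu.bounded_above_of_compact_support (huc.fderiv ℝ))

end CorkscrewDomain

section PartialDerivatives

variable {n : ℕ} {Λ : ℝ≥0} {ψ u : EuclideanSpace ℝ (Fin n) → ℝ}

theorem convMax_eq_radialMax (ψ u : EuclideanSpace ℝ (Fin n) → ℝ) (j : Fin n) :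
    convMax n ψ u j = radialMax volume ψ (pderivIdx n j u) := by
  ext x
  simp only [convMax, radialMax, iSup_subtype, mollify, convolution_lsmul_swap, dilate, smul_eq_mul,
    finrank_euclideanSpace_fin, mul_comm (pderivIdx n j u _), ← Real.norm_eq_abs, ofReal_norm]

theorem measurable_convMax (hψ : IsLipschitzMollifier volume Λ ψ) (hu : ContDiff ℝ 1 u)
    (j : Fin n) : Measurable (convMax n ψ u j) := by
  rw [convMax_eq_radialMax]
  exact measurable_radialMax hψ ((hu.continuous_fderiv one_ne_zero).clm_apply continuous_const)

theorem radialMax_fderiv_le_sum_convMax (hψ : IsLipschitzMollifier volume Λ ψ)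
    (hu : ContDiff ℝ 1 u) (huc : HasCompactSupport u) (x : EuclideanSpace ℝ (Fin n)) :
    radialMax volume ψ (fderiv ℝ u) x ≤ ∑ j, convMax n ψ u j x := by
  refine iSup₂_le fun s hs => (enorm_le_sum_enorm_apply_single _).trans
    (Finset.sum_le_sum fun j _ => ?_)
  have happly : mollify volume ψ s (fderiv ℝ u) x (EuclideanSpace.single j 1) =
      mollify volume ψ s (pderivIdx n j u) x :=
    convolution_precompR_apply (lsmul ℝ ℝ) (hψ.continuous_dilate s).locallyIntegrable
      (huc.fderiv ℝ) (hu.continuous_fderiv one_ne_zero) x _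
  rw [happly, convMax_eq_radialMax]
  exact enorm_mollify_le_radialMax hs x

theorem lintegral_radialMax_fderiv_rpow_le (hψ : IsLipschitzMollifier volume Λ ψ)
    (hu : ContDiff ℝ 1 u) (huc : HasCompactSupport u) {p : ℝ} (hp : 0 < p) :
    ∫⁻ x, radialMax volume ψ (fderiv ℝ u) x ^ p ≤
      (n : ℝ≥0∞) ^ p * ∑ j, ∫⁻ x, convMax n ψ u j x ^ p := by
  have hmeas (j : Fin n) : Measurable fun x => convMax n ψ u j x ^ p :=
    (measurable_convMax hψ hu j).pow_const p
  rw [← lintegral_finsetSum _ fun j _ => hmeas j, ← lintegral_const_mul' _ _ (by finiteness)]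
  refine lintegral_mono fun x => ?_
  calc radialMax volume ψ (fderiv ℝ u) x ^ p ≤ (∑ j, convMax n ψ u j x) ^ p := by
        gcongr
        exact radialMax_fderiv_le_sum_convMax hψ hu huc x
    _ ≤ (n : ℝ≥0∞) ^ p * ∑ j, convMax n ψ u j x ^ p := by
        simpa using rpow_sum_le_card_rpow_mul_sum_rpow Finset.univ (convMax n ψ u · x) hp

end PartialDerivatives

theorem exists_isLipschitzMollifier_of_contDiff {E : Type*} [NormedAddCommGroup E]
    [NormedSpace ℝ E] [FiniteDimensional ℝ E] [MeasurableSpace E] {μ : Measure E} {ψ : E → ℝ}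
    (hψ : ContDiff ℝ 1 ψ) (hsupp : support ψ ⊆ ball 0 1) (hint : ∫ x, ψ x ∂μ = 1) :
    ∃ Λ, IsLipschitzMollifier μ Λ ψ := by
  have hψc : HasCompactSupport ψ := (isCompact_closedBall 0 1).of_isClosed_subset
    (isClosed_tsupport ψ) (closure_minimal (hsupp.trans ball_subset_closedBall) isClosed_closedBall)
  obtain ⟨Λ, hΛ⟩ := ContDiff.lipschitzWith_of_hasCompactSupport hψc hψ one_ne_zero
  exact ⟨Λ, hΛ, hsupp, hint⟩

theorem hardy_inequality_lipschitz_domain_general {m : ℕ} {p : ℝ}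
    (hp : ((m + 1 : ℕ) : ℝ) / ((m + 1 : ℕ) + 1) < p)
    {Ω : Set (EuclideanSpace ℝ (Fin (m + 1)))} (hΩ : IsOpen Ω) (hne : Ω ≠ univ) {D c : ℝ}
    (hc : 0 < c) (hcork : HasExteriorCorkscrew D c Ω) {Λ : ℝ≥0}
    {ψ : EuclideanSpace ℝ (Fin (m + 1)) → ℝ} (hψ : IsLipschitzMollifier volume Λ ψ) :
    ∃ C : ℝ≥0∞, C ≠ ⊤ ∧
      ∀ u : EuclideanSpace ℝ (Fin (m + 1)) → ℝ,
        ContDiff ℝ 1 u → HasCompactSupport u → support u ⊆ Ω →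
        ∫⁻ x in Ω, ENNReal.ofReal (|u x| / infDist x (frontier Ω)) ^ p ≤
          C * ∑ j : Fin (m + 1), ∫⁻ x, convMax (m + 1) ψ u j x ^ p := by
  have hp₀ : 0 < p := lt_trans (by positivity) hp
  obtain ⟨C, hC, hhardy⟩ := exists_lintegral_div_infDist_rpow_le (F := ℝ) hψ
    (by rwa [finrank_euclideanSpace_fin]) hΩ hne hc hcork
  refine ⟨C * ((m + 1 : ℕ) : ℝ≥0∞) ^ p, by finiteness, fun u hu huc hsupp => ?_⟩
  refine (hhardy u hu huc hsupp).trans ?_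
  rw [mul_assoc]
  gcongr
  exact lintegral_radialMax_fderiv_rpow_le hψ hu huc hp₀

end HardyInequality

/-- **Theorem 4.2.** Hardy's inequality for Hardy–Sobolev functions on a bounded
Lipschitz domain `Ω ⊆ ℝⁿ` (`n = m+1 ≥ 1`), in the range `n/(n+1) < p ≤ 1`:
`∫_Ω (|u|/dist(·,∂Ω))^p ≤ C Σ_j ‖sup_{t>0} |(∂_j u) * ψ_t|‖_{L^p}^p` for every smooth
`u` compactly supported in `Ω`. -/
theorem hardy_inequality_lipschitz_domain
    (m : ℕ) (p : ℝ)
    (hp1 : ((m + 1 : ℕ) : ℝ) / ((m + 1 : ℕ) + 1) < p) (hp2 : p ≤ 1)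
    (Ω : Set (EuclideanSpace ℝ (Fin (m + 1)))) (hΩ : IsLipschitzDomain m Ω)
    (ψ : EuclideanSpace ℝ (Fin (m + 1)) → ℝ) (hψ : ContDiff ℝ (⊤ : ℕ∞) ψ)
    (hψsupp : tsupport ψ ⊆ ball 0 1) (hψint : ∫ x, ψ x = 1) :
    ∃ C : ℝ≥0∞, C ≠ ⊤ ∧
      ∀ u : EuclideanSpace ℝ (Fin (m + 1)) → ℝ,
        ContDiff ℝ (⊤ : ℕ∞) u → HasCompactSupport u → tsupport u ⊆ Ω →
        ∫⁻ x in Ω, ENNReal.ofReal (|u x| / infDist x (frontier Ω)) ^ p ≤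
          C * ∑ j : Fin (m + 1), ∫⁻ x, convMax (m + 1) ψ u j x ^ p := by
  obtain ⟨c, hc, hcork⟩ := hΩ.exists_hasExteriorCorkscrew
  obtain ⟨Λ, hmol⟩ := exists_isLipschitzMollifier_of_contDiff (hψ.of_le (by norm_cast))
    ((subset_tsupport ψ).trans hψsupp) hψint
  obtain ⟨C, hC, hhardy⟩ :=
    hardy_inequality_lipschitz_domain_general hp1 hΩ.1 hΩ.ne_univ hc hcork hmol
  exact ⟨C, hC, fun u hu huc husupp =>
    hhardy u (hu.of_le (by norm_cast)) huc ((subset_tsupport u).trans husupp)⟩
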